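/- Let (X_n) be a Markov chain on (-∞, M] satisfying the minorization condition P(x,A) ≥ α·ℓ(A) (ℓ uniform on [-h,h]) and the zero conditional mean condition, and let O_n = S_{L_n} be the overshoot process over level 0 (i.e., θ̲ = θ̄ = 0 in the crossing-time construction). Then there exists a probability measure υ on (0,∞) such that Law(O_n) → υ in total variation at a geometric rate, and for every bounded measurable φ : (0,∞) → ℝ, (1/n)Σ_{j=1}^n φ(O_j) → ∫ φ dυ almost surely. -/

import Mathlib

open MeasureTheory ProbabilityTheory Filter Set



/-- Normalized Lebesgue measure on `[-h, h]`. -/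
noncomputable def unifIcc (h : ℝ) : Measure ℝ :=
  (ENNReal.ofReal (2 * h))⁻¹ • (volume.restrict (Set.Icc (-h) h))

/-- The random walk `S n = S₀ + X₁ + ⋯ + Xₙ` along a trajectory. -/
noncomputable def Swalk {Ω : Type*} (X : ℕ → Ω → ℝ) (S0 : Ω → ℝ) (ω : Ω) : ℕ → ℝ :=
  fun n => S0 ω + ∑ k ∈ Finset.Icc 1 n, X k ω

/-- The alternating crossing times `(Tₙ, Lₙ)` of the levels `θlo < 0 < θhi`:
`L₀ = 0`, `T_{n+1} = min{k > Lₙ : S k < θlo}`, `L_{n+1} = min{k > T_{n+1} : S k > θhi}`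
(`sInf` of an empty set of naturals being `0` by convention). -/
noncomputable def crossTimes (θlo θhi : ℝ) (S : ℕ → ℝ) : ℕ → ℕ × ℕ
  | 0 => (0, 0)
  | n + 1 =>
      let T := sInf {k | (crossTimes θlo θhi S n).2 < k ∧ S k < θlo}
      (T, sInf {k | T < k ∧ θhi < S k})

/-- The overshoot process over level `0`: `O₀ = max(S₀, 0)`, `Oₙ = S_{Lₙ}` where `Lₙ` are
the successive up-crossing times of level `0` (i.e. `θlo = θhi = 0`). -/
noncomputable def Oproc {Ω : Type*} (X : ℕ → Ω → ℝ) (S0 : Ω → ℝ) (n : ℕ) (ω : Ω) : ℝ :=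
  if n = 0 then max (S0 ω) 0
  else Swalk X S0 ω ((crossTimes 0 0 (Swalk X S0 ω) n).2)



lemma tv_integral_le {E : Type*} [MeasurableSpace E] (μ ν : Measure E) [IsProbabilityMeasure μ]
    [IsProbabilityMeasure ν] (δ : ℝ) (h : ∀ A, MeasurableSet A → |μ.real A - ν.real A| ≤ δ)
    (g : E → ℝ) (hg : Measurable g) (K : ℝ) (hK : ∀ y, 0 ≤ g y ∧ g y ≤ K) :
    |∫ y, g y ∂μ - ∫ y, g y ∂ν| ≤ K * δ := by
  have hK0 : 0 ≤ K := by
    have : Nonempty E := by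
      by_contra hne
      rw [not_nonempty_iff] at hne
      have := measure_univ (μ := μ)
      rw [univ_eq_empty_iff.2 hne] at this; simp at this
    obtain ⟨y⟩ := this
    exact (hK y).1.trans (hK y).2
  have key : ∀ m : Measure E, IsProbabilityMeasure m →
      ∫ y, g y ∂m = ∫ t in Ioc 0 K, m.real {a | t < g a} := by
    intro m hm
    have hi : Integrable g m := by
      refine Integrable.of_bound hg.aestronglyMeasurable K (ae_of_all _ fun y => ?_)
      rw [Real.norm_eq_abs, abs_of_nonneg (hK y).1]; exact (hK y).2
    rw [hi.integral_eq_integral_meas_lt (ae_of_all _ fun y => (hK y).1)]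
    apply setIntegral_eq_of_subset_of_forall_sdiff_eq_zero measurableSet_Ioi
    · exact fun t ht => ht.1
    · intro t ht
      have : {a | t < g a} = ∅ := by
        ext a
        simp only [mem_setOf_eq, mem_empty_iff_false, iff_false, not_lt]
        have h1 : K < t := by
          by_contra hc
          exact ht.2 ⟨ht.1, not_lt.1 hc⟩
        linarith [(hK a).2]
      simp [this]
  have hInt0 : ∀ m : Measure E, IsProbabilityMeasure m →
      IntegrableOn (fun t => m.real {a | t < g a}) (Ioc 0 K) := by
    intro m hm
    have hanti : Antitone (fun t : ℝ => m.real {a | t < g a}) := by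
      intro s t hst
      exact measureReal_mono (fun a (ha : t < g a) => lt_of_le_of_lt hst ha)
    exact (hanti.antitoneOn _).integrableOn_isCompact isCompact_Icc |>.mono_set Ioc_subset_Icc_self
  rw [key μ inferInstance, key ν inferInstance, ← integral_sub (hInt0 μ inferInstance) (hInt0 ν inferInstance)]
  have := norm_setIntegral_le_of_norm_le_const (μ := volume) (s := Ioc 0 K) (C := δ)
    (f := fun t => μ.real {a | t < g a} - ν.real {a | t < g a}) (by simp)
    (fun t _ => h _ (measurableSet_lt measurable_const hg))
  rw [Real.norm_eq_abs] at this
  refine this.trans (le_of_eq ?_)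
  simp [Measure.real, hK0, mul_comm]

lemma tv_integral_le' {E : Type*} [MeasurableSpace E] (μ ν : Measure E) [IsProbabilityMeasure μ]
    [IsProbabilityMeasure ν] (δ : ℝ) (h : ∀ A, MeasurableSet A → |μ.real A - ν.real A| ≤ δ)
    (g : E → ℝ) (hg : Measurable g) (K : ℝ) (hK : ∀ y, |g y| ≤ K) :
    |∫ y, g y ∂μ - ∫ y, g y ∂ν| ≤ 2 * K * δ := by
  have hi : ∀ m : Measure E, IsProbabilityMeasure m → Integrable g m := fun m hm =>
    Integrable.of_bound hg.aestronglyMeasurable K (ae_of_all _ fun y => hK y)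
  have := tv_integral_le μ ν δ h (fun y => g y + K) (hg.add_const K) (2 * K)
    (fun y => by have := abs_le.1 (hK y); constructor <;> linarith)
  rw [integral_add (hi μ inferInstance) (integrable_const _),
    integral_add (hi ν inferInstance) (integrable_const _)] at this
  simpa using this

lemma doeblin_osc {E : Type*} [MeasurableSpace E] (Q : Kernel E E) [IsMarkovKernel Q]
    (ν : Measure E) (hQ : ∀ y, ν ≤ Q y) [IsFiniteMeasure ν] (n : ℕ) :
    ∀ (g : E → ℝ) (a d : ℝ), Measurable g → (∀ y, a ≤ g y ∧ g y ≤ a + d) →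
      ∃ a', ∀ y, a' ≤ ∫ z, g z ∂((Q ^ n) y) ∧
        ∫ z, g z ∂((Q ^ n) y) ≤ a' + (1 - ν.real univ) ^ n * d := by
  induction n with
  | zero =>
    intro g a d hg h
    refine ⟨a, fun y => ?_⟩
    have : (Q ^ 0) y = Measure.dirac y := by
      rw [pow_zero]; exact Kernel.id_apply y
    rw [this, integral_dirac' _ _ hg.stronglyMeasurable]
    simpa using h y
  | succ n ih =>
    intro g a d hg h
    have hi : ∀ m : Measure E, IsFiniteMeasure m → Integrable g m := fun m hm =>
      Integrable.of_bound hg.aestronglyMeasurable (|a| + |d|) (ae_of_all _ fun y => by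
        have h1 := (h y).1; have h2 := (h y).2
        rw [Real.norm_eq_abs, abs_le]
        have := neg_abs_le a; have := le_abs_self a; have := le_abs_self d
        have := abs_nonneg d
        constructor <;> linarith)
    have hQm : ∀ m : ℕ, IsMarkovKernel (Q ^ m) := by
      intro m
      induction m with
      | zero => rw [pow_zero]; exact inferInstanceAs (IsMarkovKernel Kernel.id)
      | succ m ihm => rw [pow_succ]; exact inferInstanceAs (IsMarkovKernel ((Q^m) ∘ₖ Q))
    have hstep : ∀ y, ∫ z, g z ∂((Q ^ (n+1)) y) = ∫ w, (∫ z, g z ∂(Q w)) ∂((Q^n) y) := by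
      intro y
      have := hQm n
      have hfin : IsFiniteMeasure ((Q ∘ₖ (Q ^ n : Kernel E E)) y) := inferInstance
      rw [pow_succ']
      exact Kernel.integral_comp (κ := Q ^ n) (η := Q) (hi _ hfin)
    have hg1 : Measurable (fun w => ∫ z, g z ∂(Q w)) :=
      (StronglyMeasurable.integral_kernel (κ := Q) hg.stronglyMeasurable).measurable
    obtain ⟨a', ha'⟩ := ih (fun w => ∫ z, g z ∂(Q w))
      (∫ z, g z ∂ν + (1 - ν.real univ) * a) ((1 - ν.real univ) * d) hg1 (by
        intro y
        have e1 : ∫ z, (g z - a) ∂ν ≤ ∫ z, (g z - a) ∂(Q y) :=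
          integral_mono_measure (hQ y) (ae_of_all _ fun z => by simpa using (h z).1)
            ((hi _ inferInstance).sub (integrable_const _))
        have e2 : ∫ z, (a + d - g z) ∂ν ≤ ∫ z, (a + d - g z) ∂(Q y) :=
          integral_mono_measure (hQ y) (ae_of_all _ fun z => by simpa using (h z).2)
            ((integrable_const _).sub (hi _ inferInstance))
        rw [integral_sub (hi _ inferInstance) (integrable_const _),
          integral_sub (hi _ inferInstance) (integrable_const _)] at e1
        rw [integral_sub (integrable_const _) (hi _ inferInstance),
          integral_sub (integrable_const _) (hi _ inferInstance)] at e2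
        simp at e1 e2
        constructor <;> nlinarith)
    refine ⟨a', fun y => ?_⟩
    rw [hstep y, pow_succ, mul_assoc]
    exact ha' y

lemma markov_pow {E : Type*} [MeasurableSpace E] (Q : Kernel E E) [IsMarkovKernel Q] (m : ℕ) :
    IsMarkovKernel (Q ^ m) := by
  induction m with
  | zero => rw [pow_zero]; exact inferInstanceAs (IsMarkovKernel Kernel.id)
  | succ m ihm => rw [pow_succ]; exact inferInstanceAs (IsMarkovKernel ((Q^m) ∘ₖ Q))

/-- Doeblin theorem. -/
lemma doeblin {E : Type*} [MeasurableSpace E] [Nonempty E] (Q : Kernel E E) [IsMarkovKernel Q]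
    (ν : Measure E) (hQ : ∀ y, ν ≤ Q y) (hν : ν ≠ 0) :
    ∃ π : Measure E, IsProbabilityMeasure π ∧ ∃ r : ℝ, 0 ≤ r ∧ r < 1 ∧ ∀ (n : ℕ) (y : E) (A : Set E),
      MeasurableSet A → |((Q ^ n) y).real A - π.real A| ≤ r ^ n := by
  obtain ⟨y0⟩ := ‹Nonempty E›
  have : IsFiniteMeasure ν := ⟨lt_of_le_of_lt (hQ y0 univ) (by simp)⟩
  have hQm := markov_pow Q
  set r : ℝ := 1 - ν.real univ with hr
  have hν0 : 0 < ν.real univ := by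
    rw [measureReal_def]; exact ENNReal.toReal_pos (by simpa using hν) (measure_ne_top _ _)
  have hν1 : ν.real univ ≤ 1 := by
    rw [measureReal_def]; exact ENNReal.toReal_le_of_le_ofReal zero_le_one (by simpa using hQ y0 univ)
  have hr0 : 0 ≤ r := by linarith
  have hr1 : r < 1 := by linarith
  have hrt : Tendsto (fun n : ℕ => r ^ n) atTop (nhds 0) := tendsto_pow_atTop_nhds_zero_of_lt_one hr0 hr1
  have hcau : ∀ A, MeasurableSet A → ∀ n k y y', |((Q ^ (n + k)) y).real A - ((Q ^ n) y').real A| ≤ r ^ n := by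
    intro A hA n k y y'
    obtain ⟨a', ha'⟩ := doeblin_osc Q ν hQ n (A.indicator 1) 0 1 (measurable_one.indicator hA) (by
      intro y; by_cases hy : y ∈ A <;> simp [hy])
    simp only [integral_indicator_one hA, mul_one] at ha'
    have h1 : ((Q ^ (n + k)) y).real A = ∫ w, ((Q ^ n) w).real A ∂((Q ^ k) y) := by
      simp only [← integral_indicator_one hA]
      rw [pow_add]
      refine Kernel.integral_comp (κ := Q ^ k) (η := Q ^ n) ?_
      refine (integrable_const (1:ℝ)).indicator hA
    have hmeas : Measurable (fun w => ((Q ^ n) w).real A) :=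
      ((Q ^ n).measurable_coe hA).ennreal_toReal
    have hInt0 : Integrable (fun w => ((Q ^ n) w).real A) ((Q ^ k) y) := by
      refine Integrable.of_bound hmeas.aestronglyMeasurable 1 (ae_of_all _ fun w => ?_)
      rw [Real.norm_eq_abs, abs_of_nonneg measureReal_nonneg]; exact measureReal_le_one
    have h2 : a' ≤ ((Q ^ (n + k)) y).real A := by
      rw [h1]
      have := integral_mono (μ := (Q ^ k) y) (integrable_const a') hInt0 (fun w => (ha' w).1)
      simpa using this
    have h3 : ((Q ^ (n + k)) y).real A ≤ a' + r ^ n := by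
      rw [h1]
      have := integral_mono (μ := (Q ^ k) y) hInt0 (integrable_const (a' + r ^ n)) (fun w => (ha' w).2)
      simpa using this
    have := ha' y'
    rw [abs_le]; constructor <;> linarith
  have hlim : ∀ A : Set E, ∃ p : ℝ, MeasurableSet A → ∀ n y, |((Q ^ n) y).real A - p| ≤ r ^ n := by
    intro A
    by_cases hA : MeasurableSet A
    · have hc : CauchySeq (fun n => ((Q ^ n) y0).real A) := by
        refine cauchySeq_of_le_tendsto_0' (fun n => r ^ n) (fun n m hnm => ?_) hrt
        obtain ⟨k, rfl⟩ := Nat.exists_eq_add_of_le hnm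
        rw [dist_comm]
        exact hcau A hA n k y0 y0
      obtain ⟨p, hp⟩ := cauchySeq_tendsto_of_complete hc
      refine ⟨p, fun _ n y => ?_⟩
      rw [abs_sub_comm]
      have h1 : Tendsto (fun k => |((Q ^ (n + k)) y0).real A - ((Q ^ n) y).real A|) atTop
          (nhds |p - ((Q ^ n) y).real A|) := by
        have : Tendsto (fun k => ((Q ^ (n + k)) y0).real A) atTop (nhds p) := by
          have := (tendsto_add_atTop_iff_nat n).2 hp
          simpa [add_comm] using this
        exact (this.sub_const _).abs
      exact le_of_tendsto h1 (Eventually.of_forall fun k => hcau A hA n k y0 y)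
    · exact ⟨0, fun h => absurd h hA⟩
  choose p hp using hlim
  have ht : ∀ A, MeasurableSet A → Tendsto (fun n => ((Q ^ n) y0).real A) atTop (nhds (p A)) := by
    intro A hA
    rw [tendsto_iff_dist_tendsto_zero]
    exact squeeze_zero (fun _ => dist_nonneg) (fun n => hp A hA n y0) hrt
  have hp0 : ∀ A, MeasurableSet A → 0 ≤ p A := fun A hA =>
    ge_of_tendsto (ht A hA) (Eventually.of_forall fun n => measureReal_nonneg)
  have hpadd : ∀ A B, MeasurableSet A → MeasurableSet B → Disjoint A B → p (A ∪ B) = p A + p B := by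
    intro A B hA hB hd
    refine tendsto_nhds_unique (ht _ (hA.union hB)) ?_
    refine ((ht A hA).add (ht B hB)).congr fun n => ?_
    have := hQm n
    rw [measureReal_union hd hB]
  have hpe : p ∅ = 0 := by
    refine tendsto_nhds_unique (ht _ MeasurableSet.empty) ?_
    simp
  have hpu : p univ = 1 := by
    refine tendsto_nhds_unique (ht _ MeasurableSet.univ) ?_
    have : ∀ n, ((Q ^ n) y0).real univ = 1 := fun n => by
      have := hQm n
      simp
    simp [this]
  let π : Measure E := Measure.ofMeasurable (fun A _ => ENNReal.ofReal (p A)) (by simp [hpe]) (by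
    intro f hf hd
    have hfin : ∀ N : ℕ, p (⋃ i, f i) = ∑ i ∈ Finset.range N, p (f i) + p (⋃ i, f (i + N)) := by
      intro N
      have h1 : ∀ N : ℕ, p (⋃ i ∈ Finset.range N, f i) = ∑ i ∈ Finset.range N, p (f i) := by
        intro N
        induction N with
        | zero => simp [hpe]
        | succ N ih =>
          rw [Finset.sum_range_succ, ← ih, Finset.range_add_one, Finset.set_biUnion_insert, union_comm]
          refine hpadd _ _ (Finset.measurableSet_biUnion _ fun i _ => hf i) (hf N) ?_
          rw [disjoint_iUnion₂_left]
          intro i hi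
          exact hd (Finset.mem_range.1 hi).ne
      rw [← h1, ← hpadd _ _ (Finset.measurableSet_biUnion _ fun i _ => hf i) (MeasurableSet.iUnion fun i => hf _)]
      · congr 1
        ext x
        simp only [mem_iUnion, mem_union, Finset.mem_range, exists_prop]
        constructor
        · rintro ⟨i, hi⟩
          by_cases h : i < N
          · exact Or.inl ⟨i, h, hi⟩
          · exact Or.inr ⟨i - N, by rwa [Nat.sub_add_cancel (not_lt.1 h)]⟩
        · rintro (⟨i, _, hi⟩ | ⟨i, hi⟩)
          exacts [⟨i, hi⟩, ⟨_, hi⟩]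
      · rw [disjoint_iUnion₂_left]
        intro i hi
        rw [disjoint_iUnion_right]
        intro j
        exact hd (by have := Finset.mem_range.1 hi; omega)
    have htail : Tendsto (fun N => p (⋃ i, f (i + N))) atTop (nhds 0) := by
      rw [Metric.tendsto_atTop]
      intro e he
      obtain ⟨n, hn⟩ := ((tendsto_order.1 hrt).2 (e/2) (by linarith)).exists
      have := hQm n
      have h2 : Tendsto (fun N => ((Q ^ n) y0).real (⋃ i, f (i + N))) atTop (nhds 0) := by
        have h3 : Tendsto (fun N => ((Q ^ n) y0) (⋃ i, f (i + N))) atTop (nhds 0) := by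
          have h4 : (⋂ N, ⋃ i, f (i + N)) = ∅ := by
            ext x
            simp only [mem_iInter, mem_iUnion, mem_empty_iff_false, iff_false, not_forall, not_exists]
            by_contra hc
            push Not at hc
            obtain ⟨i, hi⟩ := hc 0
            obtain ⟨j, hj⟩ := hc (i + 1)
            exact (hd (show i ≠ j + (i+1) by omega)).le_bot ⟨by simpa using hi, hj⟩
          have := tendsto_measure_iInter_atTop (μ := (Q ^ n) y0) (s := fun N => ⋃ i, f (i + N))
            (fun N => (MeasurableSet.iUnion fun i => hf _).nullMeasurableSet)
            (by
              intro N N' h x hx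
              simp only [mem_iUnion] at hx ⊢
              obtain ⟨i, hi⟩ := hx
              exact ⟨i + (N' - N), by convert hi using 2; omega⟩) ⟨0, measure_ne_top _ _⟩
          rw [h4, measure_empty] at this
          exact this
        have := (ENNReal.tendsto_toReal ENNReal.zero_ne_top).comp h3
        rw [ENNReal.toReal_zero] at this
        exact this
      obtain ⟨N0, hN0⟩ := eventually_atTop.1 ((tendsto_order.1 h2).2 (e/2) (by linarith))
      refine ⟨N0, fun N hN => ?_⟩
      have a1 := hp _ (MeasurableSet.iUnion fun i => hf (i + N)) n y0
      have a2 := hN0 N hN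
      have a3 := hp0 _ (MeasurableSet.iUnion fun i => hf (i + N))
      rw [Real.dist_eq, sub_zero, abs_of_nonneg a3]
      rw [abs_le] at a1
      linarith
    have hs : HasSum (fun i => p (f i)) (p (⋃ i, f i)) := by
      rw [hasSum_iff_tendsto_nat_of_nonneg (fun i => hp0 _ (hf i))]
      have : Tendsto (fun N => p (⋃ i, f i) - p (⋃ i, f (i + N))) atTop (nhds (p (⋃ i, f i) - 0)) :=
        tendsto_const_nhds.sub htail
      rw [sub_zero] at this
      refine this.congr fun N => ?_
      rw [hfin N]; ring
    show ENNReal.ofReal (p (⋃ i, f i)) = ∑' i, ENNReal.ofReal (p (f i))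
    rw [← hs.tsum_eq, ENNReal.ofReal_tsum_of_nonneg (fun i => hp0 _ (hf i)) hs.summable])
  have hπ : ∀ A, MeasurableSet A → π A = ENNReal.ofReal (p A) := fun A hA =>
    Measure.ofMeasurable_apply A hA
  refine ⟨π, ⟨by rw [hπ _ MeasurableSet.univ, hpu]; simp⟩, r, hr0, hr1, fun n y A hA => ?_⟩
  rw [measureReal_def π, hπ A hA, ENNReal.toReal_ofReal (hp0 A hA)]
  exact hp A hA n y


structure GoodK (P : Kernel ℝ ℝ) (M h : ℝ) (c : ENNReal) : Prop where
  hM : 0 < M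
  hh : 0 < h
  hc : c ≠ 0
  upper : ∀ x, P x (Ioi M) = 0
  mino : ∀ x, c • volume.restrict (Icc (-h) h) ≤ P x
  int : ∀ x, Integrable (fun y => y) (P x)
  mean : ∀ x, ∫ y, y ∂(P x) = 0

/-- One step operator of the pair (last increment, `σ` times walk). -/
noncomputable def opr (P : Kernel ℝ ℝ) (σ : ℝ) (f : ℝ × ℝ → ENNReal) (z : ℝ × ℝ) : ENNReal :=
  ∫⁻ y, f (y, z.2 + σ * y) ∂(P z.1)

lemma opr_meas (P : Kernel ℝ ℝ) [IsMarkovKernel P] (σ : ℝ) {f : ℝ × ℝ → ENNReal}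
    (hf : Measurable f) : Measurable (opr P σ f) := by
  have : Measurable (fun p : (ℝ × ℝ) × ℝ => f (p.2, p.1.2 + σ * p.2)) := by fun_prop
  exact this.lintegral_kernel_prod_right' (κ := P.comap Prod.fst measurable_fst)

lemma opr_mono (P : Kernel ℝ ℝ) (σ : ℝ) {f g : ℝ × ℝ → ENNReal} (hfg : ∀ z, f z ≤ g z) (z) :
    opr P σ f z ≤ opr P σ g z := lintegral_mono fun _ => hfg _

/-- smooth majorant of the positive part -/
noncomputable def psi (L t : ℝ) : ℝ := (t + Real.sqrt (t ^ 2 + L ^ 2)) / 2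

lemma psi_neg (L t : ℝ) : psi L (-t) = psi L t - t := by
  unfold psi; rw [neg_sq]; ring

lemma psi_nonneg (L t : ℝ) : 0 ≤ psi L t := by
  unfold psi
  have : |t| ≤ Real.sqrt (t ^ 2 + L ^ 2) := Real.abs_le_sqrt (by nlinarith [sq_nonneg L])
  have := neg_abs_le t
  linarith

lemma le_psi (L t : ℝ) : t ≤ psi L t := by
  have := psi_nonneg L (-t)
  rw [psi_neg] at this; linarith

lemma psi_le {L : ℝ} (hL : 0 < L) (t : ℝ) : psi L t ≤ |t| + L := by
  unfold psi
  have : Real.sqrt (t ^ 2 + L ^ 2) ≤ |t| + L := by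
    rw [Real.sqrt_le_left (by positivity)]
    nlinarith [sq_abs t, abs_nonneg t]
  have := le_abs_self t
  linarith

lemma psi_cont (L : ℝ) : Continuous (psi L) := by unfold psi; fun_prop

lemma psi_step {L : ℝ} (hL : 0 < L) (t : ℝ) : ∃ c, 0 ≤ c ∧ c ≤ 1 ∧
    ∀ z, psi L (t + z) ≤ psi L t + c * z + z ^ 2 / (4 * L) := by
  set p := Real.sqrt (t ^ 2 + L ^ 2) with hp
  have hLp : L ≤ p := Real.le_sqrt_of_sq_le (by nlinarith [sq_nonneg t])
  have hp0 : 0 < p := by linarith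
  have htp : |t| ≤ p := Real.abs_le_sqrt (by nlinarith [sq_nonneg L])
  have hpp : p ^ 2 = t ^ 2 + L ^ 2 := Real.sq_sqrt (by positivity)
  have h1 : |t / p| ≤ 1 := by rw [abs_div, abs_of_pos hp0, div_le_one hp0]; exact htp
  rw [abs_le] at h1
  refine ⟨(1 + t / p) / 2, by linarith, by linarith, fun z => ?_⟩
  unfold psi
  rw [← hp]
  have h2 : Real.sqrt ((t + z) ^ 2 + L ^ 2) ≤ p + (2 * t * z + z ^ 2) / (2 * p) := by
    have h3 : 0 ≤ p + (2 * t * z + z ^ 2) / (2 * p) := by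
      have : p + (2 * t * z + z ^ 2) / (2 * p) = (2 * p ^ 2 + 2 * t * z + z ^ 2) / (2 * p) := by
        field_simp; ring
      rw [this]
      apply div_nonneg _ (by linarith)
      nlinarith [sq_nonneg (t + z)]
    rw [Real.sqrt_le_left h3]
    have : (p + (2 * t * z + z ^ 2) / (2 * p)) ^ 2 =
      p ^ 2 + (2 * t * z + z ^ 2) + ((2 * t * z + z ^ 2) / (2 * p)) ^ 2 := by
      field_simp; ring
    rw [this, hpp]
    nlinarith [sq_nonneg ((2 * t * z + z ^ 2) / (2 * p))]
  have h4 : z ^ 2 / (2 * p) ≤ z ^ 2 / (2 * L) := by gcongr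
  have h5 : (2 * t * z + z ^ 2) / (2 * p) = t / p * z + z ^ 2 / (2 * p) := by field_simp
  have h6 : z ^ 2 / (4 * L) = z ^ 2 / (2 * L) / 2 := by field_simp; ring
  rw [h6]
  nlinarith

lemma psi_monotone (L : ℝ) : Monotone (psi L) := by
  intro s t hst
  -- via sqrt comparison
  unfold psi
  have hs : |s| ≤ Real.sqrt (s ^ 2 + L ^ 2) := Real.abs_le_sqrt (by nlinarith [sq_nonneg L])
  have ht : |t| ≤ Real.sqrt (t ^ 2 + L ^ 2) := Real.abs_le_sqrt (by nlinarith [sq_nonneg L])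
  have hs2 := Real.sq_sqrt (show 0 ≤ s ^ 2 + L ^ 2 by positivity)
  have ht2 := Real.sq_sqrt (show 0 ≤ t ^ 2 + L ^ 2 by positivity)
  set a := Real.sqrt (s ^ 2 + L ^ 2)
  set b := Real.sqrt (t ^ 2 + L ^ 2)
  by_contra hc
  push Not at hc
  have h1 : a - b > t - s := by linarith
  have h2 := abs_le.1 hs
  have h3 := abs_le.1 ht
  have h4 : (a - b) * (a + b) = (s - t) * (s + t) := by nlinarith
  have h6 : 0 ≤ a + b + (s + t) := by linarith [abs_nonneg s]
  have h5 : 0 < a + b := by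
    rcases (Real.sqrt_nonneg (s^2+L^2)).lt_or_eq with h | h
    · have : 0 ≤ b := Real.sqrt_nonneg _
      have : 0 < a := h
      linarith
    · have ha : a = 0 := h.symm
      have : 0 ≤ b := Real.sqrt_nonneg _
      linarith
  nlinarith

noncomputable def bK (P : Kernel ℝ ℝ) (K x : ℝ) : ℝ := ∫ y, max y (-K) ∂(P x)

set_option linter.unusedSectionVars false
section
variable {P : Kernel ℝ ℝ} [IsMarkovKernel P] {M h : ℝ} {c : ENNReal}

lemma GoodK.ae_le (hP : GoodK P M h c) (x : ℝ) : ∀ᵐ y ∂(P x), y ≤ M := by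
  rw [ae_iff]; simpa [Ioi] using hP.upper x

lemma GoodK.int_max (hP : GoodK P M h c) (K x : ℝ) : Integrable (fun y => max y (-K)) (P x) :=
  (hP.int x).sup (integrable_const _)

lemma GoodK.bK_nonneg (hP : GoodK P M h c) (K x : ℝ) : 0 ≤ bK P K x := by
  rw [← hP.mean x]
  exact integral_mono (hP.int x) (hP.int_max K x) fun y => le_max_left _ _

lemma GoodK.bK_le (hP : GoodK P M h c) {K : ℝ} (hK : 0 ≤ K) (x : ℝ) : bK P K x ≤ M := by
  have := integral_mono_ae (hP.int_max K x) (integrable_const M) (by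
    filter_upwards [hP.ae_le x] with y hy
    have := hP.hM
    exact max_le hy (by linarith))
  simpa [bK] using this

lemma bK_meas (K : ℝ) : Measurable (bK P K) := by
  have : Measurable (fun y : ℝ => max y (-K)) := by fun_prop
  exact (StronglyMeasurable.integral_kernel (κ := P) this.stronglyMeasurable).measurable

lemma GoodK.psi_int (hP : GoodK P M h c) {L : ℝ} (hL : 0 < L) (x t : ℝ) :
    Integrable (fun y => psi L (t + y)) (P x) := by
  refine Integrable.mono' (g := fun y => |t| + |y| + L)
    (((integrable_const _).add (hP.int x).abs).add (integrable_const _))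
    ((psi_cont L).comp (by fun_prop : Continuous fun y : ℝ => t + y)).aestronglyMeasurable
    (ae_of_all _ fun y => ?_)
  rw [Real.norm_eq_abs, abs_of_nonneg (psi_nonneg _ _)]
  have := psi_le hL (t + y)
  have := abs_add_le t y
  linarith

lemma GoodK.psi_bound (hP : GoodK P M h c) {L K : ℝ} (hL : 0 < L) (hK : M ≤ K) (x t : ℝ) :
    ∫ y, psi L (t + y) ∂(P x) ≤ psi L t + bK P K x + K ^ 2 / (4 * L) := by
  obtain ⟨a, ha0, ha1, ha⟩ := psi_step hL t
  have hi : Integrable (fun y => psi L t + a * max y (-K) + K ^ 2 / (4 * L)) (P x) :=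
    ((integrable_const _).add ((hP.int_max K x).const_mul a)).add (integrable_const _)
  have h1 := integral_mono_ae (hP.psi_int hL x t) hi (by
    filter_upwards [hP.ae_le x] with y hy
    have hM := hP.hM
    have e1 : psi L (t + y) ≤ psi L (t + max y (-K)) :=
      psi_monotone L (by linarith [le_max_left y (-K)])
    have e2 := ha (max y (-K))
    have e3 : (max y (-K)) ^ 2 ≤ K ^ 2 := by
      apply sq_le_sq'
      · exact le_max_right y (-K)
      · exact max_le (by linarith) (by linarith)
    have e4 : (max y (-K)) ^ 2 / (4 * L) ≤ K ^ 2 / (4 * L) := by gcongr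
    linarith)
  have hi0 : Integrable (fun y => psi L t + a * max y (-K)) (P x) :=
    (integrable_const _).add ((hP.int_max K x).const_mul a)
  rw [integral_add hi0 (integrable_const _),
    integral_add (integrable_const _) ((hP.int_max K x).const_mul a), integral_const_mul] at h1
  simp only [integral_const, probReal_univ, one_smul] at h1
  have h2 := hP.bK_nonneg K x
  unfold bK at *
  nlinarith

lemma GoodK.psi_op (hP : GoodK P M h c) {L K : ℝ} (hL : 0 < L) (hK : M ≤ K) {σ : ℝ}
    (hσ : σ = 1 ∨ σ = -1) (z : ℝ × ℝ) :
    opr P σ (fun z => ENNReal.ofReal (psi L z.2)) z ≤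
      ENNReal.ofReal (psi L z.2) + ENNReal.ofReal (bK P K z.1) + ENNReal.ofReal (K ^ 2 / (4 * L)) := by
  obtain ⟨x, t⟩ := z
  have hb := hP.bK_nonneg K x
  rw [← ENNReal.ofReal_add (psi_nonneg _ _) hb, ← ENNReal.ofReal_add (add_nonneg (psi_nonneg _ _) hb) (by positivity)]
  unfold opr
  simp only
  rcases hσ with rfl | rfl
  · simp only [one_mul]
    rw [← ofReal_integral_eq_lintegral_ofReal (hP.psi_int hL x t) (ae_of_all _ fun y => psi_nonneg _ _)]
    exact ENNReal.ofReal_le_ofReal (hP.psi_bound hL hK x t)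
  · have e : ∀ y, psi L (t + -1 * y) = psi L (-t + y) + t - y := fun y => by
      have := psi_neg L (-t + y)
      rw [show t + -1 * y = -(-t + y) by ring, this]; ring
    simp only [e]
    have hi : Integrable (fun y => psi L (-t + y) + t - y) (P x) :=
      ((hP.psi_int hL x (-t)).add (integrable_const _)).sub (hP.int x)
    rw [← ofReal_integral_eq_lintegral_ofReal hi (ae_of_all _ fun y => by
      simp only [Pi.zero_apply]; rw [← e]; exact psi_nonneg _ _)]
    apply ENNReal.ofReal_le_ofReal
    have hi0 : Integrable (fun y => psi L (-t + y) + t) (P x) :=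
      (hP.psi_int hL x (-t)).add (integrable_const _)
    rw [integral_sub hi0 (hP.int x),
      integral_add (hP.psi_int hL x (-t)) (integrable_const _), hP.mean x]
    simp only [integral_const, probReal_univ, one_smul]
    have := hP.psi_bound hL hK x (-t)
    rw [psi_neg] at this
    linarith

lemma GoodK.psi_iter (hP : GoodK P M h c) {L K : ℝ} (hL : 0 < L) (hK : M ≤ K) {σ : ℝ}
    (hσ : σ = 1 ∨ σ = -1) (N : ℕ) (z : ℝ × ℝ) :
    (opr P σ)^[N] (fun z => ENNReal.ofReal (psi L z.2)) z ≤
      ENNReal.ofReal (psi L z.2) + ∑ i ∈ Finset.range N, ∫⁻ w, ENNReal.ofReal (bK P K w) ∂((P ^ i) z.1)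
        + N * ENNReal.ofReal (K ^ 2 / (4 * L)) := by
  induction N generalizing z with
  | zero => simp
  | succ N ih =>
    rw [Function.iterate_succ_apply']
    have hbm : Measurable fun w => ENNReal.ofReal (bK P K w) := (bK_meas K).ennreal_ofReal
    have hBm : ∀ i : ℕ, Measurable fun y => ∫⁻ w, ENNReal.ofReal (bK P K w) ∂((P ^ i) y) := fun i =>
      hbm.lintegral_kernel
    refine (opr_mono P σ ih z).trans ?_
    have h1 : opr P σ (fun z => ENNReal.ofReal (psi L z.2) + ∑ i ∈ Finset.range N, ∫⁻ w, ENNReal.ofReal (bK P K w) ∂((P ^ i) z.1)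
        + N * ENNReal.ofReal (K ^ 2 / (4 * L))) z =
      opr P σ (fun z => ENNReal.ofReal (psi L z.2)) z + ∑ i ∈ Finset.range N, ∫⁻ w, ENNReal.ofReal (bK P K w) ∂((P ^ (i+1)) z.1) + N * ENNReal.ofReal (K ^ 2 / (4 * L)) := by
      unfold opr
      simp only
      rw [lintegral_add_right _ measurable_const, lintegral_add_right _
        (Finset.measurable_sum _ fun i _ => hBm i), lintegral_finsetSum _ (fun i _ => hBm i)]
      simp only [lintegral_const, measure_univ, mul_one]
      congr 2
      refine Finset.sum_congr rfl fun i _ => ?_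
      rw [pow_succ]
      exact (Kernel.lintegral_comp (P ^ i) P z.1 hbm).symm
    rw [h1]
    have h2 := hP.psi_op hL hK hσ z
    have h0 : ∫⁻ w, ENNReal.ofReal (bK P K w) ∂((P ^ 0) z.1) = ENNReal.ofReal (bK P K z.1) := by
      have : (P ^ 0) z.1 = Measure.dirac z.1 := by
        rw [pow_zero]; exact Kernel.id_apply _
      rw [this, lintegral_dirac' _ hbm]
    rw [Finset.sum_range_succ', h0]
    push_cast
    refine (add_le_add_left (add_le_add_left h2 _) _).trans (le_of_eq ?_)
    ring

lemma GoodK.growth (hP : GoodK P M h c) {σ : ℝ} (hσ : σ = 1 ∨ σ = -1) {k : ℝ} (hk : 0 < k)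
    (z : ℝ × ℝ) : ∃ C : ℝ, 0 ≤ C ∧ ∀ N : ℕ,
      (opr P σ)^[N] (fun z => ENNReal.ofReal z.2) z ≤ ENNReal.ofReal (C + N * k) := by
  obtain ⟨π, hπ, r, hr0, hr1, hr⟩ := doeblin P _ hP.mino (by
    intro h0
    have := congrArg (fun m => m univ) h0
    simp [hP.hc] at this
    linarith [hP.hh])
  have hpm := markov_pow P
  have hM := hP.hM
  have hT : Tendsto (fun K : ℕ => ∫ x, bK P K x ∂π) atTop (nhds 0) := by
    have h0 : (0:ℝ) = ∫ x, (0:ℝ) ∂π := by simp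
    rw [h0]
    refine tendsto_integral_of_dominated_convergence (fun _ => M)
      (fun K => (bK_meas _).aestronglyMeasurable) (integrable_const _) (fun K => ae_of_all _ fun x => ?_)
      (ae_of_all _ fun x => ?_)
    · rw [Real.norm_eq_abs, abs_of_nonneg (hP.bK_nonneg _ _)]
      exact hP.bK_le (by positivity) x
    · rw [← hP.mean x]
      unfold bK
      refine tendsto_integral_of_dominated_convergence (fun y => |y|)
        (fun K => (hP.int_max _ _).aestronglyMeasurable) (hP.int x).abs (fun K => ae_of_all _ fun y => ?_)
        (ae_of_all _ fun y => ?_)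
      · rw [Real.norm_eq_abs]
        rcases max_cases y (-(K:ℝ)) with ⟨h1, h2⟩ | ⟨h1, h2⟩
        · rw [h1]
        · rw [h1, abs_neg, abs_of_nonneg (by positivity : (0:ℝ) ≤ K)]
          have := neg_abs_le y; linarith
      · obtain ⟨K0, hK0⟩ := exists_nat_ge (-y)
        refine tendsto_const_nhds.congr' ?_
        filter_upwards [eventually_ge_atTop K0] with K hK
        have : (K0:ℝ) ≤ K := by exact_mod_cast hK
        rw [max_eq_left]; linarith
  obtain ⟨K0, hK0⟩ := exists_nat_ge M
  obtain ⟨K, hK1, hK2⟩ := (((tendsto_order.1 hT).2 (k/2) (by linarith)).and (eventually_ge_atTop K0)).exists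
  have hMK : M ≤ (K:ℝ) := hK0.trans (by exact_mod_cast hK2)
  set L : ℝ := (K:ℝ) ^ 2 / (2 * k) with hLdef
  have hKpos : (0:ℝ) < K := by linarith
  have hL : 0 < L := by positivity
  have hL2 : (K:ℝ) ^ 2 / (4 * L) = k / 2 := by rw [hLdef]; field_simp; ring
  refine ⟨psi L z.2 + M / (1 - r), add_nonneg (psi_nonneg _ _) (div_nonneg hM.le (by linarith)), fun N => ?_⟩
  have hmono : ∀ N z, (opr P σ)^[N] (fun z => ENNReal.ofReal z.2) z ≤
      (opr P σ)^[N] (fun z => ENNReal.ofReal (psi L z.2)) z := by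
    intro N
    induction N with
    | zero => intro z; exact ENNReal.ofReal_le_ofReal (le_psi _ _)
    | succ N ih => intro z; rw [Function.iterate_succ_apply', Function.iterate_succ_apply']; exact opr_mono P σ ih z
  refine (hmono N z).trans ((hP.psi_iter hL hMK hσ N z).trans ?_)
  have hB : ∀ i : ℕ, ∫⁻ w, ENNReal.ofReal (bK P K w) ∂((P ^ i) z.1) ≤ ENNReal.ofReal (k/2 + M * r ^ i) := by
    intro i
    rw [← ofReal_integral_eq_lintegral_ofReal _ (ae_of_all _ fun y => hP.bK_nonneg _ _)]
    · apply ENNReal.ofReal_le_ofReal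
      have := tv_integral_le ((P ^ i) z.1) π (r ^ i) (hr i z.1) (bK P K) (bK_meas _) M
        (fun y => ⟨hP.bK_nonneg _ _, hP.bK_le hKpos.le _⟩)
      rw [abs_le] at this
      linarith
    · refine Integrable.of_bound (bK_meas _).aestronglyMeasurable M (ae_of_all _ fun x => ?_)
      rw [Real.norm_eq_abs, abs_of_nonneg (hP.bK_nonneg _ _)]
      exact hP.bK_le (by positivity) x
  have hB2 : ∑ i ∈ Finset.range N, ∫⁻ w, ENNReal.ofReal (bK P K w) ∂((P ^ i) z.1) ≤
      ENNReal.ofReal (N * (k / 2) + M / (1 - r)) := by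
    refine (Finset.sum_le_sum fun i _ => hB i).trans ?_
    rw [← ENNReal.ofReal_sum_of_nonneg (fun i _ => by positivity)]
    apply ENNReal.ofReal_le_ofReal
    rw [Finset.sum_add_distrib, ← Finset.mul_sum]
    have : ∑ i ∈ Finset.range N, r ^ i ≤ (1 - r)⁻¹ := by
      rw [← tsum_geometric_of_lt_one hr0 hr1]
      exact (summable_geometric_of_lt_one hr0 hr1).sum_le_tsum _ (fun i _ => by positivity)
    have := mul_le_mul_of_nonneg_left this hM.le
    simp only [Finset.sum_const, Finset.card_range, nsmul_eq_mul]
    rw [div_eq_mul_inv M]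
    linarith
  rw [hL2]
  have hN : (N : ENNReal) * ENNReal.ofReal (k / 2) = ENNReal.ofReal (N * (k/2)) := by
    rw [ENNReal.ofReal_mul (by positivity), ENNReal.ofReal_natCast]
  rw [hN]
  refine (add_le_add_left (add_le_add_right hB2 _) _).trans ?_
  have : 0 ≤ M / (1 - r) := div_nonneg hM.le (by linarith)
  rw [← ENNReal.ofReal_add (psi_nonneg _ _) (by positivity), ← ENNReal.ofReal_add (add_nonneg (psi_nonneg _ _) (by positivity)) (by positivity)]
  apply ENNReal.ofReal_le_ofReal
  linarith
end


set_option linter.unusedSectionVars false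

def Anon : Set (ℝ × ℝ) := {z | 0 ≤ z.2}

lemma Anon_meas : MeasurableSet Anon := measurableSet_le measurable_const measurable_snd

/-- probability that the walk stays nonnegative for `N` steps (including time 0). -/
noncomputable def uS (P : Kernel ℝ ℝ) (σ : ℝ) : ℕ → ℝ × ℝ → ENNReal
  | 0 => Anon.indicator (fun _ => 1)
  | N + 1 => Anon.indicator (opr P σ (uS P σ N))

noncomputable def uI (P : Kernel ℝ ℝ) (σ : ℝ) (z : ℝ × ℝ) : ENNReal := ⨅ N, uS P σ N z

section
variable {P : Kernel ℝ ℝ} [IsMarkovKernel P] {M h : ℝ} {c : ENNReal} {σ : ℝ}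

lemma uS_meas (N : ℕ) : Measurable (uS P σ N) := by
  induction N with
  | zero => exact measurable_const.indicator Anon_meas
  | succ N ih => exact (opr_meas P σ ih).indicator Anon_meas

lemma uI_meas : Measurable (uI P σ) := Measurable.iInf fun N => uS_meas N

lemma opr_one_le {f : ℝ × ℝ → ENNReal} (hf : ∀ z, f z ≤ 1) (z) : opr P σ f z ≤ 1 := by
  unfold opr
  calc _ ≤ ∫⁻ y, 1 ∂(P z.1) := lintegral_mono fun y => hf _
    _ = 1 := by simp

lemma uS_le_one (N : ℕ) (z) : uS P σ N z ≤ 1 := by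
  induction N generalizing z with
  | zero => exact indicator_le_self' (fun _ _ => zero_le) z |>.trans le_rfl
  | succ N ih => exact (indicator_le_self _ _ z).trans (opr_one_le ih z)

lemma uS_anti : Antitone (uS P σ) := by
  refine antitone_nat_of_succ_le fun N => ?_
  induction N with
  | zero =>
    intro z
    exact indicator_le_indicator (opr_one_le (fun z => uS_le_one 0 z) z)
  | succ N ih =>
    intro z
    exact indicator_le_indicator (opr_mono P σ ih z)

lemma uS_mono_s (N : ℕ) (x : ℝ) : Monotone fun s => uS P σ N (x, s) := by
  induction N generalizing x with
  | zero =>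
    intro s t hst
    simp only [uS, Anon, indicator, mem_setOf_eq]
    split_ifs with h1 h2
    · exact le_rfl
    · exact absurd (h1.trans hst) h2
    · exact zero_le
    · exact le_rfl
  | succ N ih =>
    intro s t hst
    have : opr P σ (uS P σ N) (x, s) ≤ opr P σ (uS P σ N) (x, t) :=
      lintegral_mono fun y => ih y (by simpa using hst)
    simp only [uS, Anon, indicator, mem_setOf_eq]
    split_ifs with h1 h2
    · exact this
    · exact absurd (h1.trans hst) h2
    · exact zero_le
    · exact le_rfl

lemma uI_mono_s (x : ℝ) {s t : ℝ} (hst : s ≤ t) : uI P σ (x, s) ≤ uI P σ (x, t) :=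
  iInf_mono fun N => uS_mono_s N x hst

lemma uI_fix (z) : uI P σ z = Anon.indicator (opr P σ (uI P σ)) z := by
  have h1 : uI P σ z = ⨅ N, uS P σ (N + 1) z := by
    refine le_antisymm (le_iInf fun N => iInf_le _ _) (le_iInf fun N => (iInf_le _ N).trans (uS_anti N.le_succ z))
  rw [h1]
  by_cases hz : z ∈ Anon
  · simp only [uS, indicator_of_mem hz]
    unfold opr uI
    rw [lintegral_iInf]
    · intro N
      exact (uS_meas N).comp (by fun_prop)
    · intro N N' hN y
      exact uS_anti hN _
    · refine ne_top_of_le_ne_top ENNReal.one_ne_top (opr_one_le (fun z => uS_le_one 0 z) z)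
  · simp [uS, indicator_of_notMem hz]

lemma uI_le_one (z) : uI P σ z ≤ 1 := (iInf_le _ 0).trans (uS_le_one 0 z)

lemma GoodK.opr_ge (hP : GoodK P M h c) (f : ℝ × ℝ → ENNReal) (z) :
    c * ∫⁻ y in Icc (-h) h, f (y, z.2 + σ * y) ≤ opr P σ f z := by
  unfold opr
  rw [← smul_eq_mul, ← lintegral_smul_measure]
  exact lintegral_mono' (hP.mino z.1) le_rfl

lemma uI_sup_one {z0 : ℝ × ℝ} (h0 : uI P σ z0 ≠ 0) : ⨆ z, uI P σ z = 1 := by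
  set q := ⨆ z, uI P σ z with hq
  have hq1 : q ≤ 1 := iSup_le uI_le_one
  have hqt : q ≠ ⊤ := ne_top_of_le_ne_top ENNReal.one_ne_top hq1
  have h1 : ∀ N z, uI P σ z ≤ q * uS P σ N z := by
    intro N
    induction N with
    | zero =>
      intro z
      by_cases hz : z ∈ Anon
      · simp only [uS, indicator_of_mem hz, mul_one]; exact le_iSup _ z
      · rw [uI_fix, indicator_of_notMem hz]; exact zero_le
    | succ N ih =>
      intro z
      by_cases hz : z ∈ Anon
      · rw [uI_fix]
        simp only [uS, indicator_of_mem hz]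
        unfold opr
        rw [← lintegral_const_mul' _ _ hqt]
        exact lintegral_mono fun y => ih _
      · rw [uI_fix, indicator_of_notMem hz]; exact zero_le
  have h2 : uI P σ z0 ≤ q * uI P σ z0 := by
    conv_rhs => unfold uI
    rw [ENNReal.mul_iInf (fun hh => absurd hh hqt)]
    exact le_iInf fun N => h1 N z0
  refine le_antisymm hq1 ?_
  by_contra hc
  push Not at hc
  have := ENNReal.mul_lt_mul_left h0 (ne_top_of_le_ne_top ENNReal.one_ne_top (uI_le_one z0)) hc
  rw [one_mul] at this
  exact absurd h2 (not_le.2 this)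

noncomputable def vI (P : Kernel ℝ ℝ) (h σ s : ℝ) : ENNReal :=
  ∫⁻ y in Icc (-h) h, uI P σ (y, s + σ * y)

lemma GoodK.vI_pos1 (hP : GoodK P M h c) {z0 : ℝ × ℝ} (h0 : uI P σ z0 ≠ 0) : ∃ s, vI P h σ s ≠ 0 := by
  have hs := uI_sup_one h0
  have hα : c * ENNReal.ofReal (2 * h) ≠ 0 := by
    have := hP.hh
    refine mul_ne_zero hP.hc ?_
    simp; linarith
  have hlt : 1 - c * ENNReal.ofReal (2 * h) < ⨆ z, uI P σ z := by
    rw [hs]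
    exact ENNReal.sub_lt_self ENNReal.one_ne_top one_ne_zero hα
  obtain ⟨z, hz⟩ := lt_iSup_iff.1 hlt
  refine ⟨z.2, fun hv => ?_⟩
  have hm : Measurable fun y => uI P σ (y, z.2 + σ * y) := uI_meas.comp (by fun_prop)
  have hv' := hv
  unfold vI at hv'
  rw [lintegral_eq_zero_iff hm] at hv'
  set B : Set ℝ := {y | uI P σ (y, z.2 + σ * y) = 0} with hB
  have hBm : MeasurableSet B := hm (measurableSet_singleton 0)
  have h1 : c * ENNReal.ofReal (2 * h) ≤ P z.1 B := by
    refine le_trans (le_of_eq ?_) (hP.mino z.1 B)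
    have : (volume.restrict (Icc (-h) h)) B = ENNReal.ofReal (2 * h) := by
      have e : (volume.restrict (Icc (-h) h)) B = (volume.restrict (Icc (-h) h)) univ := by
        refine measure_congr ?_
        filter_upwards [hv'] with y hy
        exact propext ⟨fun _ => trivial, fun _ => hy⟩
      rw [e, Measure.restrict_apply_univ, Real.volume_Icc]; congr 1; ring
    simp [this]
  have h2 : uI P σ z ≤ P z.1 Bᶜ := by
    rw [uI_fix]
    refine (indicator_le_self _ _ z).trans ?_
    unfold opr
    rw [← lintegral_indicator_one hBm.compl]
    refine lintegral_mono fun y => ?_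
    by_cases hy : y ∈ B
    · have : uI P σ (y, z.2 + σ * y) = 0 := hy
      simp [this]
    · simp only [mem_compl_iff, hy, not_false_eq_true, indicator_of_mem, Pi.one_apply]
      exact uI_le_one _
  rw [prob_compl_eq_one_sub hBm] at h2
  exact absurd (hz.trans_le h2) (not_lt.2 (tsub_le_tsub_left h1 1))

lemma vI_mono {s t : ℝ} (hst : s ≤ t) : vI P h σ s ≤ vI P h σ t :=
  lintegral_mono fun y => uI_mono_s y (by linarith)

lemma GoodK.uI_ge (hP : GoodK P M h c) {z : ℝ × ℝ} (hz : 0 ≤ z.2) : c * vI P h σ z.2 ≤ uI P σ z := by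
  rw [uI_fix, indicator_of_mem (show z ∈ Anon from hz)]
  exact hP.opr_ge _ z

lemma GoodK.vI_descend (hP : GoodK P M h c) (hσ : σ = 1 ∨ σ = -1) {s s' : ℝ} (h1 : s - h / 2 ≤ s')
    (h2 : -(h/2) ≤ s') (hs : vI P h σ s ≠ 0) : vI P h σ s' ≠ 0 := by
  have hh := hP.hh
  set B : Set ℝ := {y | h / 2 ≤ σ * y} ∩ Icc (-h) h with hB
  have hBv : volume B ≠ 0 := by
    have : ENNReal.ofReal (h / 2) ≤ volume B := by
      rcases hσ with rfl | rfl
      · calc ENNReal.ofReal (h/2) = volume (Icc (h/2) h) := by rw [Real.volume_Icc]; congr 1; ring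
          _ ≤ volume B := measure_mono fun y hy => ⟨by simpa using hy.1, by linarith [hy.1], hy.2⟩
      · calc ENNReal.ofReal (h/2) = volume (Icc (-h) (-(h/2))) := by rw [Real.volume_Icc]; congr 1; ring
          _ ≤ volume B := measure_mono fun y hy => ⟨by have := hy.2; simp; linarith, hy.1, by linarith [hy.2]⟩
    intro h0
    rw [h0] at this
    simp at this; linarith
  have key : c * vI P h σ s * volume B ≤ vI P h σ s' := by
    unfold vI
    rw [← setLIntegral_const]
    refine le_trans ?_ (lintegral_mono_set (s := B) inter_subset_right)
    refine setLIntegral_mono' (MeasurableSet.inter (measurableSet_le measurable_const (by fun_prop)) measurableSet_Icc) fun y hy => ?_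
    have hy1 : h / 2 ≤ σ * y := hy.1
    refine le_trans ?_ (hP.uI_ge (z := (y, s' + σ * y)) (by simp only; linarith))
    gcongr
    exact vI_mono (by simp only; linarith)
  intro h0
  rw [h0] at key
  exact (mul_ne_zero (mul_ne_zero hP.hc hs) hBv) (le_antisymm key zero_le)

lemma GoodK.vI_pos (hP : GoodK P M h c) (hσ : σ = 1 ∨ σ = -1) {z0 : ℝ × ℝ} (h0 : uI P σ z0 ≠ 0) :
    vI P h σ (-(h / 2)) ≠ 0 := by
  obtain ⟨s, hs⟩ := hP.vI_pos1 h0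
  have hh := hP.hh
  have : ∀ k : ℕ, ∀ s, s ≤ k * (h / 2) - h / 2 → vI P h σ s ≠ 0 → vI P h σ (-(h / 2)) ≠ 0 := by
    intro k
    induction k with
    | zero =>
      intro s hs h1 h2
      have := vI_mono (P := P) (h := h) (σ := σ) (show s ≤ -(h/2) by simpa using hs)
      rw [h2] at this
      exact h1 (le_antisymm this zero_le)
    | succ k ih =>
      intro s hs h1
      by_cases hs0 : s ≤ 0
      · exact hP.vI_descend hσ (by linarith) le_rfl h1
      · push_cast at hs
        refine ih (s - h / 2) (by linarith) (hP.vI_descend hσ le_rfl (by linarith) h1)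
  obtain ⟨k, hk⟩ := exists_nat_ge ((s + h / 2) / (h / 2))
  refine this k s ?_ hs
  rw [div_le_iff₀ (by linarith)] at hk
  linarith

noncomputable def mS (P : Kernel ℝ ℝ) (σ : ℝ) (N : ℕ) (z : ℝ × ℝ) : ENNReal :=
  ∫⁻ t in Iic z.2, uS P σ N (z.1, t)

lemma opr_mS (N : ℕ) (z) : opr P σ (mS P σ N) z = ∫⁻ t in Iic z.2, opr P σ (uS P σ N) (z.1, t) := by
  unfold opr mS
  simp only
  have : ∀ y, ∫⁻ t in Iic (z.2 + σ * y), uS P σ N (y, t) = ∫⁻ t in Iic z.2, uS P σ N (y, t + σ * y) := by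
    intro y
    rw [← lintegral_indicator measurableSet_Iic, ← lintegral_indicator measurableSet_Iic,
      ← lintegral_add_right_eq_self _ (σ * y)]
    refine lintegral_congr fun t => ?_
    simp [indicator]
  simp_rw [this]
  rw [lintegral_lintegral_swap]
  have : Measurable (fun p : ℝ × ℝ => uS P σ N (p.1, p.2 + σ * p.1)) := (uS_meas N).comp (by fun_prop)
  exact this.aemeasurable

lemma GoodK.mS_step (hP : GoodK P M h c) (N : ℕ) (z) :
    mS P σ (N + 1) z + Anon.indicator (fun _ => c * vI P h σ (-(h/2)) * ENNReal.ofReal (h / 2)) z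
      ≤ opr P σ (mS P σ N) z := by
  rw [opr_mS]
  have hm : ∀ N, Measurable fun t => uS P σ N (z.1, t) := fun N => (uS_meas N).comp (by fun_prop)
  have hom : Measurable fun t => opr P σ (uS P σ N) (z.1, t) := (opr_meas P σ (uS_meas N)).comp (by fun_prop)
  have hh := hP.hh
  by_cases hz : z ∈ Anon
  · have hz' : 0 ≤ z.2 := hz
    rw [indicator_of_mem hz]
    have e1 : mS P σ (N + 1) z = ∫⁻ t in Icc 0 z.2, opr P σ (uS P σ N) (z.1, t) := by
      unfold mS
      rw [← lintegral_indicator measurableSet_Iic, ← lintegral_indicator measurableSet_Icc]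
      refine lintegral_congr fun t => ?_
      by_cases h1 : t ≤ z.2 <;> by_cases h2 : 0 ≤ t <;> simp [indicator, uS, Anon, h1, h2]
    have e2 : c * vI P h σ (-(h/2)) * ENNReal.ofReal (h / 2) ≤ ∫⁻ t in Ico (-(h/2)) 0, opr P σ (uS P σ N) (z.1, t) := by
      have : ENNReal.ofReal (h/2) = volume (Ico (-(h/2)) 0) := by simp
      rw [this, ← setLIntegral_const]
      refine setLIntegral_mono' measurableSet_Ico fun t ht => ?_
      calc c * vI P h σ (-(h/2)) ≤ c * vI P h σ t := by gcongr; exact vI_mono ht.1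
        _ ≤ opr P σ (uI P σ) (z.1, t) := hP.opr_ge _ _
        _ ≤ _ := opr_mono P σ (fun z => iInf_le _ N) _
    rw [e1]
    refine (add_le_add_right e2 _).trans ?_
    rw [← lintegral_union measurableSet_Ico]
    · refine lintegral_mono_set ?_
      rintro t (ht | ht)
      · exact ht.2
      · exact ht.2.le.trans hz'
    · rw [Set.disjoint_left]
      intro t ht ht'
      exact absurd ht.1 (not_le.2 ht'.2)
  · rw [indicator_of_notMem hz, add_zero]
    refine lintegral_mono fun t => ?_
    exact indicator_le_self _ _ _

lemma GoodK.e_ge (hP : GoodK P M h c) (N : ℕ) (z) :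
    mS P σ N z + N * (c * vI P h σ (-(h/2)) * ENNReal.ofReal (h / 2)) * uS P σ N z ≤
      (opr P σ)^[N] (fun z => ENNReal.ofReal z.2) z := by
  set η := c * vI P h σ (-(h/2)) * ENNReal.ofReal (h / 2) with hη
  induction N generalizing z with
  | zero =>
    simp only [Nat.cast_zero, zero_mul, add_zero, Function.iterate_zero, id]
    unfold mS
    rw [← lintegral_indicator measurableSet_Iic]
    have : ∀ t, (Iic z.2).indicator (fun t => uS P σ 0 (z.1, t)) t = (Icc 0 z.2).indicator 1 t := by
      intro t
      by_cases h1 : t ≤ z.2 <;> by_cases h2 : 0 ≤ t <;> simp [indicator, uS, Anon, h1, h2]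
    simp_rw [this]
    rw [lintegral_indicator_one measurableSet_Icc]
    simp
  | succ N ih =>
    rw [Function.iterate_succ_apply']
    refine le_trans ?_ (opr_mono P σ ih z)
    have hadd : opr P σ (fun z => mS P σ N z + N * η * uS P σ N z) z =
        opr P σ (mS P σ N) z + N * η * opr P σ (uS P σ N) z := by
      unfold opr
      have hm : Measurable fun y => uS P σ N (y, z.2 + σ * y) := (uS_meas N).comp (by fun_prop)
      rw [lintegral_add_right _ (hm.const_mul _), lintegral_const_mul _ hm]
    rw [hadd]
    have h1 := hP.mS_step (σ := σ) N z
    rw [← hη] at h1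
    have h2 : uS P σ (N + 1) z ≤ opr P σ (uS P σ N) z := indicator_le_self _ _ z
    have h3 : η * uS P σ (N + 1) z ≤ Anon.indicator (fun _ => η) z := by
      by_cases hz : z ∈ Anon
      · rw [indicator_of_mem hz]
        calc η * uS P σ (N+1) z ≤ η * 1 := by gcongr; exact uS_le_one _ _
          _ = η := mul_one _
      · simp [uS, indicator_of_notMem hz]
    calc mS P σ (N + 1) z + ((N + 1 : ℕ) : ENNReal) * η * uS P σ (N + 1) z
        = (mS P σ (N + 1) z + η * uS P σ (N + 1) z) + N * η * uS P σ (N + 1) z := by push_cast; ring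
      _ ≤ opr P σ (mS P σ N) z + N * η * opr P σ (uS P σ N) z := by
        gcongr
        exact (add_le_add_right h3 _).trans h1

lemma GoodK.uI_zero (hP : GoodK P M h c) (hσ : σ = 1 ∨ σ = -1) (z0 : ℝ × ℝ) : uI P σ z0 = 0 := by
  by_contra h0
  have hv := hP.vI_pos hσ h0
  have hh := hP.hh
  set η := c * vI P h σ (-(h/2)) * ENNReal.ofReal (h / 2) with hη
  have hη0 : η ≠ 0 := mul_ne_zero (mul_ne_zero hP.hc hv) (by simp; linarith)
  have hq : 0 < η * uI P σ z0 := pos_iff_ne_zero.2 (mul_ne_zero hη0 h0)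
  obtain ⟨q, hq0, hqlt⟩ := ENNReal.lt_iff_exists_nnreal_btwn.1 hq
  have hqpos : (0:ℝ) < q := by exact_mod_cast hq0
  obtain ⟨C, hC0, hC⟩ := hP.growth hσ (k := q / 2) (by linarith) z0
  obtain ⟨N, hN⟩ := exists_nat_gt (C / (q / 2))
  have h1 := (hP.e_ge (σ := σ) N z0).trans (hC N)
  rw [← hη] at h1
  have h2 : ENNReal.ofReal (N * q) ≤ ENNReal.ofReal (C + N * (q / 2)) := by
    refine le_trans ?_ h1
    rw [ENNReal.ofReal_mul (by positivity), ENNReal.ofReal_natCast, ENNReal.ofReal_coe_nnreal]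
    refine le_trans ?_ le_add_self
    rw [mul_assoc]
    gcongr
    refine hqlt.le.trans ?_
    gcongr
    exact iInf_le _ N
  rw [ENNReal.ofReal_le_ofReal_iff (by positivity)] at h2
  rw [div_lt_iff₀ (by linarith)] at hN
  linarith

/-- no bounded subsolution. -/
lemma GoodK.subsol (hP : GoodK P M h c) (hσ : σ = 1 ∨ σ = -1) (w : ℝ × ℝ → ENNReal)
    (hw1 : ∀ z, w z ≤ 1) (hw : ∀ z, w z ≤ opr P σ (Anon.indicator w) z) (z) : w z = 0 := by
  have h1 : ∀ N z, Anon.indicator w z ≤ uS P σ N z := by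
    intro N
    induction N with
    | zero => intro z; exact indicator_le_indicator (hw1 z)
    | succ N ih => intro z; exact indicator_le_indicator ((hw z).trans (opr_mono P σ ih z))
  have h2 : ∀ z, Anon.indicator w z = 0 := fun z =>
    le_antisymm ((le_iInf fun N => h1 N z).trans (hP.uI_zero hσ z).le) zero_le
  refine le_antisymm ((hw z).trans ?_) zero_le
  unfold opr
  simp [h2]
end


section generic
variable {E : Type*} [MeasurableSpace E]

noncomputable def Gsum (F K : Kernel E E) : Kernel E E := Kernel.sum (fun n => F ∘ₖ (K ^ n))

lemma kpow_succ_apply (K : Kernel E E) (n : ℕ) (z : E) {A : Set E} (hA : MeasurableSet A) :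
    (K ^ (n+1)) z A = ∫⁻ z', (K ^ n) z' A ∂(K z) := by
  rw [pow_succ]; exact Kernel.comp_apply' _ _ _ hA

lemma kpow_succ_apply' (K : Kernel E E) (n : ℕ) (z : E) {A : Set E} (hA : MeasurableSet A) :
    (K ^ (n+1)) z A = ∫⁻ z', K z' A ∂((K ^ n) z) := by
  rw [pow_succ']; exact Kernel.comp_apply' _ _ _ hA

lemma kpow_zero_apply (K : Kernel E E) (z : E) : (K ^ 0) z = Measure.dirac z := by
  rw [pow_zero]; exact Kernel.id_apply z

lemma Gsum_apply (F K : Kernel E E) (z : E) {A : Set E} (hA : MeasurableSet A) :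
    Gsum F K z A = ∑' n, ∫⁻ z', F z' A ∂((K ^ n) z) := by
  unfold Gsum
  rw [Kernel.sum_apply' _ _ hA]
  simp_rw [Kernel.comp_apply' _ _ _ hA]

lemma Gsum_fix (F K : Kernel E E) (z : E) {A : Set E} (hA : MeasurableSet A) :
    Gsum F K z A = F z A + ∫⁻ z', Gsum F K z' A ∂(K z) := by
  rw [Gsum_apply F K z hA, tsum_eq_zero_add' ENNReal.summable, kpow_zero_apply,
    lintegral_dirac' _ (Kernel.measurable_coe F hA)]
  congr 1
  simp_rw [Gsum_apply F K _ hA]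
  rw [lintegral_tsum]
  · refine tsum_congr fun n => ?_
    rw [pow_succ]
    exact Kernel.lintegral_comp _ _ _ (Kernel.measurable_coe F hA)
  · intro n
    refine Measurable.aemeasurable ?_
    exact Measurable.lintegral_kernel (Kernel.measurable_coe F hA)

noncomputable def wI (K : Kernel E E) (z : E) : ENNReal := ⨅ N, (K ^ N) z univ

lemma wI_le_one (K : Kernel E E) (z : E) : wI K z ≤ 1 :=
  (iInf_le _ 0).trans (by rw [kpow_zero_apply]; simp)

lemma kpow_anti (K : Kernel E E) (hK : ∀ z, K z univ ≤ 1) (z : E) :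
    Antitone fun N => (K ^ N) z univ := by
  refine antitone_nat_of_succ_le fun N => ?_
  rw [kpow_succ_apply' K N z MeasurableSet.univ]
  calc _ ≤ ∫⁻ _, 1 ∂((K ^ N) z) := lintegral_mono fun z' => hK z'
    _ = _ := by simp

lemma kpow_le_one (K : Kernel E E) (hK : ∀ z, K z univ ≤ 1) (N : ℕ) (z : E) :
    (K ^ N) z univ ≤ 1 :=
  (kpow_anti K hK z (Nat.zero_le N)).trans (by simp only; rw [kpow_zero_apply]; simp)

lemma wI_sub (K : Kernel E E) (hK : ∀ z, K z univ ≤ 1) (z : E) :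
    wI K z ≤ ∫⁻ z', wI K z' ∂(K z) := by
  unfold wI
  rw [lintegral_iInf (fun N => Kernel.measurable_coe _ MeasurableSet.univ)]
  · refine le_iInf fun N => ?_
    rw [← kpow_succ_apply K N z MeasurableSet.univ]
    exact iInf_le _ _
  · intro N N' h z'
    exact kpow_anti K hK z' h
  · refine ne_top_of_le_ne_top ENNReal.one_ne_top ?_
    rw [← kpow_succ_apply K 0 z MeasurableSet.univ]
    exact kpow_le_one K hK _ z

lemma Gsum_markov (F K : Kernel E E) (h1 : ∀ z, F z univ + K z univ = 1)
    (hw : ∀ z, wI K z = 0) : IsMarkovKernel (Gsum F K) := by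
  have hK : ∀ z, K z univ ≤ 1 := fun z => by rw [← h1 z]; exact le_add_self
  refine ⟨fun z => ⟨?_⟩⟩
  rw [Gsum_apply F K z MeasurableSet.univ]
  have hpart : ∀ N, ∑ n ∈ Finset.range N, ∫⁻ z', F z' univ ∂((K ^ n) z) + (K ^ N) z univ = 1 := by
    intro N
    induction N with
    | zero => rw [kpow_zero_apply]; simp
    | succ N ih =>
      rw [Finset.sum_range_succ, add_assoc, kpow_succ_apply' K N z MeasurableSet.univ,
        ← lintegral_add_left (Kernel.measurable_coe F MeasurableSet.univ)]
      simp_rw [h1]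
      simpa using ih
  have t1 := (ENNReal.summable (f := fun n => ∫⁻ z', F z' univ ∂((K ^ n) z))).hasSum.tendsto_sum_nat
  have t2 : Tendsto (fun N => (K ^ N) z univ) atTop (nhds 0) := by
    have := tendsto_atTop_iInf (kpow_anti K hK z)
    have h0 : ⨅ N, (K ^ N) z univ = 0 := hw z
    rwa [h0] at this
  have t3 := t1.add t2
  simp_rw [hpart, add_zero] at t3
  exact (tendsto_nhds_unique t3 tendsto_const_nhds)

end generic

section walk
variable (P : Kernel ℝ ℝ) [IsMarkovKernel P]

noncomputable def Phat : Kernel (ℝ × ℝ) (ℝ × ℝ) :=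
  (Kernel.id ×ₖ P.comap Prod.fst measurable_fst).map (fun p => (p.2, p.1.2 + p.2))

lemma Phat_lintegral (z : ℝ × ℝ) {f : ℝ × ℝ → ENNReal} (hf : Measurable f) :
    ∫⁻ z', f z' ∂(Phat P z) = ∫⁻ y, f (y, z.2 + y) ∂(P z.1) := by
  unfold Phat
  have hm : Measurable (fun p : (ℝ × ℝ) × ℝ => (p.2, p.1.2 + p.2)) := by fun_prop
  rw [Kernel.lintegral_map _ hm _ hf, Kernel.lintegral_id_prod
    (show Measurable (fun p : (ℝ × ℝ) × ℝ => f (p.2, p.1.2 + p.2)) from hf.comp hm)]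
  simp [Kernel.comap_apply]

instance : IsMarkovKernel (Phat P) := by
  unfold Phat
  exact Kernel.IsMarkovKernel.map _ (by fun_prop)

lemma Phat_opr (z : ℝ × ℝ) {f : ℝ × ℝ → ENNReal} (hf : Measurable f) :
    ∫⁻ z', f z' ∂(Phat P z) = opr P 1 f z := by
  rw [Phat_lintegral P z hf]; unfold opr; simp

def Apos : Set (ℝ × ℝ) := {z | 0 < z.2}
def Aneg : Set (ℝ × ℝ) := {z | z.2 < 0}
def Anp : Set (ℝ × ℝ) := {z | z.2 ≤ 0}
lemma Apos_meas : MeasurableSet Apos := measurableSet_lt measurable_const measurable_snd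
lemma Aneg_meas : MeasurableSet Aneg := measurableSet_lt measurable_snd measurable_const
lemma Anp_meas : MeasurableSet Anp := measurableSet_le measurable_snd measurable_const
lemma Anp_compl : Anpᶜ = Apos := by ext z; simp [Anp, Apos]
lemma Anon_compl : Anonᶜ = Aneg := by ext z; simp [Anon, Aneg]

noncomputable def Kr {B : Set (ℝ × ℝ)} (hB : MeasurableSet B) : Kernel (ℝ × ℝ) (ℝ × ℝ) :=
  (Phat P).restrict hB

lemma Kr_le {B : Set (ℝ × ℝ)} (hB : MeasurableSet B) (z) : Kr P hB z univ ≤ 1 := by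
  unfold Kr
  rw [Kernel.restrict_apply]
  exact (Measure.restrict_apply_le _ _).trans prob_le_one

lemma Kr_lintegral {B : Set (ℝ × ℝ)} (hB : MeasurableSet B) (z) (f : ℝ × ℝ → ENNReal) :
    ∫⁻ z', f z' ∂(Kr P hB z) = ∫⁻ z', B.indicator f z' ∂(Phat P z) := by
  unfold Kr
  rw [Kernel.restrict_apply, lintegral_indicator hB]

lemma wI_meas {E : Type*} [MeasurableSpace E] (K : Kernel E E) : Measurable (wI K) :=
  Measurable.iInf fun _ => Kernel.measurable_coe _ MeasurableSet.univ

variable {P} {M h : ℝ} {c : ENNReal}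

lemma GoodK.wI_non (hP : GoodK P M h c) (z) : wI (Kr P Anon_meas) z = 0 := by
  refine hP.subsol (Or.inl rfl) _ (wI_le_one _) (fun z => ?_) z
  refine (wI_sub _ (Kr_le P _) z).trans (le_of_eq ?_)
  rw [Kr_lintegral, Phat_opr P z ((wI_meas _).indicator Anon_meas)]

lemma GoodK.wI_np (hP : GoodK P M h c) (z) : wI (Kr P Anp_meas) z = 0 := by
  have := hP.subsol (Or.inr rfl) (fun z => wI (Kr P Anp_meas) (z.1, - z.2))
    (fun z => wI_le_one _ _) (fun z => ?_) (z.1, -z.2)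
  · simpa using this
  refine (wI_sub _ (Kr_le P _) _).trans (le_of_eq ?_)
  rw [Kr_lintegral, Phat_lintegral P _ ((wI_meas _).indicator Anp_meas)]
  unfold opr
  refine lintegral_congr fun y => ?_
  simp only [indicator, Anp, Anon, mem_setOf_eq]
  have e : -(z.2 + -1 * y) = -z.2 + y := by ring
  rw [e]
  congr 1
  apply propext
  constructor <;> intro h <;> linarith

noncomputable def Dk (P : Kernel ℝ ℝ) [IsMarkovKernel P] : Kernel (ℝ × ℝ) (ℝ × ℝ) :=
  Gsum (Kr P Apos_meas) (Kr P Anp_meas)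
noncomputable def Qk (P : Kernel ℝ ℝ) [IsMarkovKernel P] : Kernel (ℝ × ℝ) (ℝ × ℝ) :=
  Gsum (Dk P ∘ₖ Kr P Aneg_meas) (Kr P Anon_meas)

lemma Kr_compl {B C : Set (ℝ × ℝ)} (hB : MeasurableSet B) (hC : MeasurableSet C) (h : Bᶜ = C) (z) :
    Kr P hC z univ + Kr P hB z univ = 1 := by
  subst h
  unfold Kr
  rw [Kernel.restrict_apply, Kernel.restrict_apply, Measure.restrict_apply_univ,
    Measure.restrict_apply_univ, add_comm, measure_add_measure_compl hB, measure_univ]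

lemma GoodK.Dk_markov (hP : GoodK P M h c) : IsMarkovKernel (Dk P) :=
  Gsum_markov _ _ (Kr_compl Anp_meas Apos_meas Anp_compl) hP.wI_np

lemma GoodK.Qk_markov (hP : GoodK P M h c) : IsMarkovKernel (Qk P) := by
  have := hP.Dk_markov
  refine Gsum_markov _ _ (fun z => ?_) hP.wI_non
  rw [← Kr_compl (P := P) Anon_meas Aneg_meas Anon_compl z]
  congr 1
  rw [Kernel.comp_apply' _ _ _ MeasurableSet.univ]
  simp

lemma Qk_ge_non (z) {A : Set (ℝ × ℝ)} (hA : MeasurableSet A) :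
    ∫⁻ z', Anon.indicator (fun z' => Qk P z' A) z' ∂(Phat P z) ≤ Qk P z A := by
  rw [Qk, Gsum_fix _ _ _ hA, ← Kr_lintegral]
  exact le_add_self

lemma Qk_ge_neg (z) {A : Set (ℝ × ℝ)} (hA : MeasurableSet A) :
    ∫⁻ z', Aneg.indicator (fun z' => Phat P z' (A ∩ Apos)) z' ∂(Phat P z) ≤ Qk P z A := by
  rw [Qk, Gsum_fix _ _ _ hA, ← Kr_lintegral P Aneg_meas, Kernel.comp_apply' _ _ _ hA]
  refine le_trans (lintegral_mono fun z' => ?_) le_self_add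
  rw [Dk, Gsum_fix _ _ _ hA]
  refine le_trans (le_of_eq ?_) le_self_add
  unfold Kr
  rw [Kernel.restrict_apply, Measure.restrict_apply hA]

end walk


section mino
variable {P : Kernel ℝ ℝ} [IsMarkovKernel P] {M h : ℝ} {c : ENNReal}

noncomputable def nu0 (h : ℝ) : Measure (ℝ × ℝ) :=
  ((volume.restrict (Icc (-(h/2)) (-(h/4)))).prod (volume.restrict (Ioc (h/2) h))).map
    (fun p => (p.2, p.1 + p.2))

lemma nu0_apply (h : ℝ) {A : Set (ℝ × ℝ)} (hA : MeasurableSet A) :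
    nu0 h A = ∫⁻ t in Icc (-(h/2)) (-(h/4)), ∫⁻ x in Ioc (h/2) h,
      A.indicator (fun _ => (1:ENNReal)) (x, t + x) := by
  have hm : Measurable (fun p : ℝ × ℝ => (p.2, p.1 + p.2)) := by fun_prop
  have hf : Measurable (A.indicator (fun _ => (1:ENNReal))) := measurable_const.indicator hA
  unfold nu0
  rw [← lintegral_indicator_one hA]
  have e : (A.indicator (1 : ℝ × ℝ → ENNReal)) = A.indicator (fun _ => (1:ENNReal)) := rfl
  rw [e, lintegral_map hf hm]
  exact lintegral_prod _ ((hf.comp hm).aemeasurable)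

lemma nu0_ne (hh : 0 < h) : nu0 h ≠ 0 := by
  intro h0
  have : nu0 h univ = 0 := by rw [h0]; simp
  rw [nu0_apply h MeasurableSet.univ] at this
  simp at this
  rcases this with h | h <;> linarith

lemma GoodK.Qk_base (hP : GoodK P M h c) (z : ℝ × ℝ) (h0 : 0 ≤ z.2) (h1 : z.2 ≤ h / 4)
    {A : Set (ℝ × ℝ)} (hA : MeasurableSet A) : c * (c * nu0 h A) ≤ Qk P z A := by
  have hh := hP.hh
  set gA : ℝ → ENNReal := fun t => ∫⁻ x in Ioc (h/2) h, A.indicator (fun _ => (1:ENNReal)) (x, t + x) with hg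
  have hAm : Measurable (A.indicator (fun _ => (1:ENNReal))) := measurable_const.indicator hA
  have hgm : Measurable gA := by
    refine Measurable.lintegral_prod_right' (f := fun p : ℝ × ℝ => A.indicator (fun _ => (1:ENNReal)) (p.2, p.1 + p.2)) ?_
    exact hAm.comp (by fun_prop)
  have hkm : Measurable fun z' => Phat P z' (A ∩ Apos) := Kernel.measurable_coe _ (hA.inter Apos_meas)
  have key : ∀ z' : ℝ × ℝ, z'.2 ∈ Icc (-(h/2)) (-(h/4)) → c * gA z'.2 ≤ Phat P z' (A ∩ Apos) := by
    intro z' hz'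
    have hAAm : Measurable ((A ∩ Apos).indicator (fun _ => (1:ENNReal))) :=
      measurable_const.indicator (hA.inter Apos_meas)
    have e : Phat P z' (A ∩ Apos) = ∫⁻ z'', (A ∩ Apos).indicator (fun _ => (1:ENNReal)) z'' ∂(Phat P z') :=
      (lintegral_indicator_one (hA.inter Apos_meas)).symm
    rw [e, Phat_opr P z' hAAm]
    refine le_trans ?_ (hP.opr_ge _ z')
    gcongr
    refine le_trans ?_ (lintegral_mono_set (s := Ioc (h/2) h) (fun x hx => ⟨by linarith [hx.1], hx.2⟩))
    refine setLIntegral_mono' measurableSet_Ioc fun x hx => ?_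
    rw [one_mul]
    by_cases hxA : (x, z'.2 + x) ∈ A
    · have : (x, z'.2 + x) ∈ A ∩ Apos := ⟨hxA, by
        change 0 < z'.2 + x; linarith [hx.1, hz'.1]⟩
      rw [indicator_of_mem hxA, indicator_of_mem this]
    · rw [indicator_of_notMem hxA]; exact zero_le
  refine le_trans ?_ (Qk_ge_neg z hA)
  rw [Phat_opr P z (hkm.indicator Aneg_meas)]
  refine le_trans ?_ (hP.opr_ge _ z)
  gcongr
  rw [nu0_apply h hA]
  change c * ∫⁻ t in Icc (-(h/2)) (-(h/4)), gA t ≤ _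
  rw [← lintegral_const_mul _ hgm, ← lintegral_indicator measurableSet_Icc,
    ← lintegral_add_left_eq_self _ z.2, ← lintegral_indicator measurableSet_Icc]
  refine lintegral_mono fun y => ?_
  by_cases hy : z.2 + y ∈ Icc (-(h/2)) (-(h/4))
  · rw [indicator_of_mem hy]
    have hy' : y ∈ Icc (-h) h := ⟨by linarith [hy.1], by linarith [hy.2]⟩
    rw [indicator_of_mem hy', one_mul]
    have : (y, z.2 + y) ∈ Aneg := by change z.2 + y < 0; linarith [hy.2]
    rw [indicator_of_mem this]
    exact key (y, z.2 + y) hy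
  · rw [indicator_of_notMem hy]; exact zero_le

lemma GoodK.Qk_mino (hP : GoodK P M h c) (k : ℕ) : ∃ ε : ENNReal, ε ≠ 0 ∧
    ∀ z : ℝ × ℝ, 0 ≤ z.2 → z.2 ≤ h / 4 + k * (h / 8) → ∀ A, MeasurableSet A →
      ε * nu0 h A ≤ Qk P z A := by
  have hh := hP.hh
  have base : ∀ z : ℝ × ℝ, 0 ≤ z.2 → z.2 ≤ h / 4 → ∀ A, MeasurableSet A →
      (c * c) * nu0 h A ≤ Qk P z A := by
    intro z h0 h1 A hA
    rw [mul_assoc]; exact hP.Qk_base z h0 h1 hA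
  induction k with
  | zero =>
    refine ⟨c * c, mul_ne_zero hP.hc hP.hc, fun z h0 h1 => base z h0 (by simpa using h1)⟩
  | succ k ih =>
    obtain ⟨ε, hε, ih⟩ := ih
    refine ⟨min (c * c) (c * (ENNReal.ofReal (h/8) * ε)), ?_, ?_⟩
    · rw [← pos_iff_ne_zero, lt_min_iff, pos_iff_ne_zero, pos_iff_ne_zero]
      refine ⟨mul_ne_zero hP.hc hP.hc, mul_ne_zero hP.hc (mul_ne_zero ?_ hε)⟩
      simp; linarith
    intro z h0 h1 A hA
    by_cases hz : z.2 ≤ h / 4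
    · refine le_trans ?_ (base z h0 hz A hA)
      gcongr; exact min_le_left _ _
    push Not at hz
    refine le_trans ?_ (Qk_ge_non z hA)
    rw [Phat_opr P z ((Kernel.measurable_coe _ hA).indicator Anon_meas)]
    refine le_trans ?_ (hP.opr_ge _ z)
    refine le_trans (b := c * (ENNReal.ofReal (h/8) * ε) * nu0 h A) (by gcongr; exact min_le_right _ _) ?_
    rw [mul_assoc]
    gcongr
    have e : ENNReal.ofReal (h/8) * ε * nu0 h A = ∫⁻ y in Icc (-(h/4)) (-(h/8)), ε * nu0 h A := by
      rw [setLIntegral_const, Real.volume_Icc, mul_assoc, mul_comm]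
      congr 2; ring
    rw [e]
    refine le_trans ?_ (lintegral_mono_set (s := Icc (-(h/4)) (-(h/8)))
      (fun x hx => ⟨by linarith [hx.1], by linarith [hx.2]⟩))
    refine setLIntegral_mono' measurableSet_Icc fun y hy => ?_
    have : (y, z.2 + 1 * y) ∈ Anon := by change 0 ≤ z.2 + 1 * y; linarith [hy.1]
    rw [indicator_of_mem this]
    push_cast at h1
    exact ih _ this (by simp only; linarith [hy.2]) A hA

noncomputable def clampS (M : ℝ) (z : ℝ × ℝ) : ℝ × ℝ := (z.1, max 0 (min z.2 M))
lemma clampS_meas (M : ℝ) : Measurable (clampS M) := by unfold clampS; fun_prop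
noncomputable def Qc (P : Kernel ℝ ℝ) [IsMarkovKernel P] (M : ℝ) : Kernel (ℝ × ℝ) (ℝ × ℝ) :=
  (Qk P).comap (clampS M) (clampS_meas M)

lemma GoodK.Qc_markov (hP : GoodK P M h c) : IsMarkovKernel (Qc P M) := by
  have := hP.Qk_markov
  unfold Qc; infer_instance

lemma Qc_eq (z : ℝ × ℝ) (h0 : 0 ≤ z.2) (h1 : z.2 ≤ M) : Qc P M z = Qk P z := by
  unfold Qc
  rw [Kernel.comap_apply]
  congr 1
  unfold clampS
  rw [min_eq_left h1, max_eq_right h0]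

lemma GoodK.Qc_ergodic (hP : GoodK P M h c) : ∃ π : Measure (ℝ × ℝ), IsProbabilityMeasure π ∧
    ∃ r : ℝ, 0 ≤ r ∧ r < 1 ∧ ∀ n y A, MeasurableSet A →
      |((Qc P M ^ n) y).real A - π.real A| ≤ r^n := by
  have := hP.Qc_markov
  have hh := hP.hh
  obtain ⟨k, hk⟩ := exists_nat_ge (M / (h / 8))
  obtain ⟨ε, hε, hq⟩ := hP.Qk_mino k
  refine doeblin (Qc P M) (ε • nu0 h) (fun y => ?_) ?_
  · refine Measure.le_iff.2 fun A hA => ?_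
    rw [Measure.smul_apply, smul_eq_mul]
    unfold Qc
    rw [Kernel.comap_apply]
    refine hq _ (le_max_left _ _) ?_ A hA
    rw [div_le_iff₀ (by linarith)] at hk
    refine max_le (by positivity) ((min_le_right _ _).trans ?_)
    linarith
  · intro h0
    have := nu0_ne hh
    apply this
    rw [← Measure.measure_univ_eq_zero] at h0 ⊢
    simpa [hε] using h0
end mino


lemma nat_sInf_eq {p : ℕ → Prop} {m : ℕ} (h1 : p m) (h2 : ∀ j, p j → m ≤ j) : sInf {k | p k} = m :=
  le_antisymm (Nat.sInf_le h1) (h2 _ (Nat.sInf_mem (s := {k | p k}) ⟨m, h1⟩))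

def Cpred (S : ℕ → ℝ) (l a b : ℕ) : Prop :=
  (∀ i, l < i → i ≤ l + a → 0 ≤ S i) ∧ S (l + a + 1) < 0 ∧
  (∀ i, l + a + 1 < i → i ≤ l + a + 1 + b → S i ≤ 0) ∧ 0 < S (l + a + 1 + b + 1)

lemma Cpred.cross {S : ℕ → ℝ} {l a b n : ℕ} (hC : Cpred S l a b) (hl : (crossTimes 0 0 S n).2 = l) :
    crossTimes 0 0 S (n+1) = (l + a + 1, l + a + 1 + b + 1) := by
  obtain ⟨h1, h2, h3, h4⟩ := hC
  have hT : sInf {k | (crossTimes 0 0 S n).2 < k ∧ S k < 0} = l + a + 1 := by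
    rw [hl]
    refine nat_sInf_eq ⟨by omega, h2⟩ ?_
    rintro j ⟨hj1, hj2⟩
    by_contra hc
    exact absurd hj2 (not_lt.2 (h1 j hj1 (by omega)))
  have hL : sInf {k | l + a + 1 < k ∧ 0 < S k} = l + a + 1 + b + 1 := by
    refine nat_sInf_eq ⟨by omega, h4⟩ ?_
    rintro j ⟨hj1, hj2⟩
    by_contra hc
    exact absurd hj2 (not_lt.2 (h3 j hj1 (by omega)))
  rw [crossTimes]
  simp only [hT, hL]

lemma Cpred.unique {S : ℕ → ℝ} {l a b a' b' : ℕ} (hC : Cpred S l a b) (hC' : Cpred S l a' b') :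
    a = a' ∧ b = b' := by
  obtain ⟨h1, h2, h3, h4⟩ := hC
  obtain ⟨g1, g2, g3, g4⟩ := hC'
  have ha : a = a' := by
    rcases lt_trichotomy a a' with h | h | h
    · exact absurd (g1 (l+a+1) (by omega) (by omega)) (not_le.2 h2)
    · exact h
    · exact absurd (h1 (l+a'+1) (by omega) (by omega)) (not_le.2 g2)
  subst ha
  refine ⟨rfl, ?_⟩
  rcases lt_trichotomy b b' with h | h | h
  · exact absurd (g3 (l+a+1+b+1) (by omega) (by omega)) (not_le.2 h4)
  · exact h
  · exact absurd (h3 (l+a+1+b'+1) (by omega) (by omega)) (not_le.2 g4)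

lemma Cpred.exists {S : ℕ → ℝ} (hS : ∀ l, (∃ i, l < i ∧ S i < 0) ∧ (∃ i, l < i ∧ 0 < S i)) (l : ℕ) :
    ∃ a b, Cpred S l a b := by
  classical
  have hd : ∀ k, (∃ i, k < i ∧ S i < 0) := fun k => (hS k).1
  have hu : ∀ k, (∃ i, k < i ∧ 0 < S i) := fun k => (hS k).2
  set T := Nat.find (hd l) with hT
  obtain ⟨hT1, hT2⟩ := Nat.find_spec (hd l)
  rw [← hT] at hT1 hT2
  set U := Nat.find (hu T) with hU
  obtain ⟨hU1, hU2⟩ := Nat.find_spec (hu T)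
  rw [← hU] at hU1 hU2
  have e1 : l + (T - l - 1) + 1 = T := by omega
  have e2 : T + (U - T - 1) + 1 = U := by omega
  refine ⟨T - l - 1, U - T - 1, ?_, by rwa [e1], ?_, by rwa [e1, e2]⟩
  · intro i hi hi2
    have := Nat.find_min (hd l) (m := i) (by rw [← hT]; omega)
    push Not at this
    exact this hi
  · rw [e1]
    intro i hi hi2
    have := Nat.find_min (hu T) (m := i) (by rw [← hU]; omega)
    push Not at this
    exact this hi

/-- The event that the `n`-th up-crossing happens properly at time `l`. -/
def Rp (S : ℕ → ℝ) : ℕ → ℕ → Prop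
  | 0, l => l = 0
  | n + 1, l => ∃ m a b, m + a + 1 + b + 1 = l ∧ Rp S n m ∧ Cpred S m a b

lemma Rp.cross {S : ℕ → ℝ} {n l : ℕ} (h : Rp S n l) : (crossTimes 0 0 S n).2 = l := by
  induction n generalizing l with
  | zero => rw [Rp] at h; rw [h]; rfl
  | succ n ih =>
    obtain ⟨m, a, b, e, h1, h2⟩ := h
    rw [h2.cross (ih h1)]; exact e

lemma Rp.exists {S : ℕ → ℝ} (hS : ∀ l, (∃ i, l < i ∧ S i < 0) ∧ (∃ i, l < i ∧ 0 < S i)) (n : ℕ) :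
    ∃ l, Rp S n l := by
  induction n with
  | zero => exact ⟨0, rfl⟩
  | succ n ih =>
    obtain ⟨m, hm⟩ := ih
    obtain ⟨a, b, h⟩ := Cpred.exists hS m
    exact ⟨_, m, a, b, rfl, hm, h⟩

lemma Rp.two_le {S : ℕ → ℝ} {n l : ℕ} (h : Rp S (n+1) l) : 2 ≤ l := by
  obtain ⟨m, a, b, e, h1, h2⟩ := h
  omega

lemma Rp.pos {S : ℕ → ℝ} {n l : ℕ} (h : Rp S (n+1) l) : 0 < S l ∧ S (l - 1) ≤ 0 := by
  obtain ⟨m, a, b, e, h1, h2⟩ := h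
  subst e
  refine ⟨h2.2.2.2, ?_⟩
  rcases Nat.eq_zero_or_pos b with rfl | hb
  · exact h2.2.1.le
  · exact h2.2.2.1 _ (by omega) (by omega)

section proc
variable {Ω : Type*} {m0 : MeasurableSpace Ω} {μ : Measure Ω} [IsProbabilityMeasure μ]
  {P : Kernel ℝ ℝ} [IsMarkovKernel P] {ℱ : Filtration ℕ m0} {X : ℕ → Ω → ℝ} {S0 : Ω → ℝ}

lemma Swalk_succ (ω : Ω) (n : ℕ) : Swalk X S0 ω (n+1) = Swalk X S0 ω n + X (n+1) ω := by
  unfold Swalk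
  rw [Finset.sum_Icc_succ_top (by omega)]; ring

noncomputable def Zp (X : ℕ → Ω → ℝ) (S0 : Ω → ℝ) (l : ℕ) (ω : Ω) : ℝ × ℝ :=
  (X l ω, Swalk X S0 ω l)

lemma S_adapted (hX : Adapted ℱ X) (hS0 : Measurable[ℱ 0] S0) (l : ℕ) :
    Measurable[ℱ l] (fun ω => Swalk X S0 ω l) := by
  unfold Swalk
  refine Measurable.add (hS0.mono (ℱ.mono (Nat.zero_le l)) le_rfl) ?_
  refine Finset.measurable_sum _ fun k hk => ?_
  exact (hX k).mono (ℱ.mono (Finset.mem_Icc.1 hk).2) le_rfl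

lemma Z_adapted (hX : Adapted ℱ X) (hS0 : Measurable[ℱ 0] S0) (l : ℕ) :
    Measurable[ℱ l] (Zp X S0 l) :=
  Measurable.prodMk (hX l) (S_adapted hX hS0 l)

lemma Z_meas (hX : Adapted ℱ X) (hS0 : Measurable[ℱ 0] S0) (l : ℕ) : Measurable (Zp X S0 l) :=
  (Z_adapted hX hS0 l).mono (ℱ.le l) le_rfl

def MkStep (μ : Measure Ω) (ℱ : Filtration ℕ m0) (X : ℕ → Ω → ℝ) (P : Kernel ℝ ℝ) : Prop :=
  ∀ n : ℕ, 1 ≤ n → ∀ A : Set ℝ, MeasurableSet A →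
      (μ[fun ω => A.indicator (fun _ => (1 : ℝ)) (X (n + 1) ω) | ℱ n])
        =ᵐ[μ] fun ω => (P (X n ω) A).toReal

lemma one_step_set (hX : Adapted ℱ X) (hMk : MkStep μ ℱ X P) {l : ℕ} (hl : 1 ≤ l) {E : Set Ω}
    (hE : MeasurableSet[ℱ l] E) {A : Set ℝ} (hA : MeasurableSet A) :
    μ (E ∩ X (l+1) ⁻¹' A) = ∫⁻ ω in E, P (X l ω) A ∂μ := by
  have hXm : ∀ l, Measurable (X l) := fun l => (hX l).mono (ℱ.le l) le_rfl
  have hE0 := ℱ.le l _ hE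
  have hInt0 : Integrable (fun ω => A.indicator (fun _ => (1 : ℝ)) (X (l + 1) ω)) μ := by
    refine Integrable.of_bound (C := 1) ?_ (ae_of_all _ fun ω => ?_)
    · exact ((measurable_const.indicator hA).comp (hXm _)).aestronglyMeasurable
    · simp only [indicator]; split_ifs <;> simp
  have h1 := setIntegral_condExp (ℱ.le l) hInt0 hE
  have h2 : ∫ ω in E, (μ[fun ω => A.indicator (fun _ => (1 : ℝ)) (X (l + 1) ω) | ℱ l]) ω ∂μ
      = ∫ ω in E, (P (X l ω) A).toReal ∂μ :=
    setIntegral_congr_ae hE0 ((hMk l hl A hA).mono fun ω h _ => h)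
  have h3 : ∫ ω in E, A.indicator (fun _ => (1 : ℝ)) (X (l + 1) ω) ∂μ = (μ (E ∩ X (l+1) ⁻¹' A)).toReal := by
    have e : (fun ω => A.indicator (fun _ => (1 : ℝ)) (X (l + 1) ω)) =
      (X (l+1) ⁻¹' A).indicator (fun _ => (1:ℝ)) := by
      ext ω; rfl
    rw [e, setIntegral_indicator (hXm _ hA), setIntegral_const]
    simp [Measure.real]
  have h4 : ∫ ω in E, (P (X l ω) A).toReal ∂μ = (∫⁻ ω in E, P (X l ω) A ∂μ).toReal := by
    refine integral_toReal ?_ (ae_of_all _ fun ω => measure_lt_top _ _)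
    exact ((Kernel.measurable_coe P hA).comp (hXm l)).aemeasurable
  have h5 : (μ (E ∩ X (l+1) ⁻¹' A)).toReal = (∫⁻ ω in E, P (X l ω) A ∂μ).toReal := by
    rw [← h3, ← h4, ← h2, h1]
  refine (ENNReal.toReal_eq_toReal_iff' (measure_ne_top _ _) ?_).1 h5
  refine ne_top_of_le_ne_top (b := ∫⁻ ω in E, 1 ∂μ) ?_ (lintegral_mono fun ω => prob_le_one)
  simp

lemma one_step (hX : Adapted ℱ X) (hS0 : Measurable[ℱ 0] S0) (hMk : MkStep μ ℱ X P)
    {l : ℕ} (hl : 1 ≤ l) {E : Set Ω}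
    (hE : MeasurableSet[ℱ l] E) {f : ℝ × ℝ → ENNReal} (hf : Measurable f) :
    ∫⁻ ω in E, f (Zp X S0 (l+1) ω) ∂μ = ∫⁻ ω in E, ∫⁻ z, f z ∂(Phat P (Zp X S0 l ω)) ∂μ := by
  have hXm : ∀ l, Measurable (X l) := fun l => (hX l).mono (ℱ.le l) le_rfl
  have hZ := Z_meas (ℱ := ℱ) hX hS0 l
  have hpair : Measurable fun ω => (Zp X S0 l ω, X (l+1) ω) := hZ.prodMk (hXm _)
  have hlaw : (μ.restrict E).map (fun ω => (Zp X S0 l ω, X (l+1) ω)) =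
      ((μ.restrict E).map (Zp X S0 l)) ⊗ₘ (P.comap Prod.fst measurable_fst) := by
    refine Measure.ext_prod fun {B A} hB hA => ?_
    rw [Measure.map_apply hpair (hB.prod hA), Measure.compProd_apply_prod hB hA,
      setLIntegral_map hB (Kernel.measurable_coe _ hA) hZ]
    have e1 : (fun ω => (Zp X S0 l ω, X (l+1) ω)) ⁻¹' (B ×ˢ A) = (Zp X S0 l ⁻¹' B) ∩ X (l+1) ⁻¹' A := rfl
    rw [e1, Measure.restrict_apply ((hZ hB).inter (hXm _ hA)), Measure.restrict_restrict (hZ hB)]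
    have e2 : Zp X S0 l ⁻¹' B ∩ X (l + 1) ⁻¹' A ∩ E = (Zp X S0 l ⁻¹' B ∩ E) ∩ X (l + 1) ⁻¹' A := by
      ext; simp; tauto
    rw [e2, one_step_set hX hMk hl ((Z_adapted hX hS0 l hB).inter hE) hA]
    rfl
  have hg : Measurable (fun p : (ℝ × ℝ) × ℝ => f (p.2, p.1.2 + p.2)) := hf.comp (by fun_prop)
  have := congrArg (fun ρ : Measure ((ℝ × ℝ) × ℝ) => ∫⁻ p, f (p.2, p.1.2 + p.2) ∂ρ) hlaw
  beta_reduce at this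
  rw [lintegral_map hg hpair, Measure.lintegral_compProd hg, lintegral_map _ hZ] at this
  · simp_rw [Phat_lintegral P _ hf]
    refine Eq.trans ?_ this
    refine lintegral_congr fun ω => ?_
    unfold Zp
    rw [Swalk_succ]
  · exact hg.lintegral_kernel_prod_right' (κ := P.comap Prod.fst measurable_fst)

def stay (X : ℕ → Ω → ℝ) (S0 : Ω → ℝ) (B : Set (ℝ × ℝ)) (l a : ℕ) : Set Ω :=
  {ω | ∀ i, l < i → i ≤ l + a → Zp X S0 i ω ∈ B}

lemma stay_zero (B : Set (ℝ × ℝ)) (l : ℕ) : stay X S0 B l 0 = univ := by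
  ext ω; simp only [stay, mem_setOf_eq, mem_univ, iff_true]; intro i h1 h2; omega

lemma stay_succ (B : Set (ℝ × ℝ)) (l a : ℕ) :
    stay X S0 B l (a+1) = stay X S0 B l a ∩ Zp X S0 (l+a+1) ⁻¹' B := by
  ext ω
  constructor
  · intro h
    exact ⟨fun i h1 h2 => h i h1 (by omega), h _ (by omega) (by omega)⟩
  · rintro ⟨h1, h2⟩ i hi hi2
    rcases Nat.lt_or_ge i (l+a+1) with h | h
    · exact h1 i hi (by omega)
    · have : i = l + a + 1 := by omega
      subst this; exact h2

lemma stay_meas (hX : Adapted ℱ X) (hS0 : Measurable[ℱ 0] S0) {B : Set (ℝ × ℝ)}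
    (hB : MeasurableSet B) (l a : ℕ) : MeasurableSet[ℱ (l+a)] (stay X S0 B l a) := by
  induction a with
  | zero => rw [stay_zero]; exact MeasurableSet.univ
  | succ a ih =>
    rw [stay_succ]
    exact MeasurableSet.inter (ℱ.mono (by omega) _ ih) (Z_adapted hX hS0 _ hB)

lemma step_in (hX : Adapted ℱ X) (hS0 : Measurable[ℱ 0] S0) (hMk : MkStep μ ℱ X P)
    {l : ℕ} (hl : 1 ≤ l) {E : Set Ω} (hE : MeasurableSet[ℱ l] E) {B : Set (ℝ × ℝ)}
    (hB : MeasurableSet B) {f : ℝ × ℝ → ENNReal} (hf : Measurable f) :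
    ∫⁻ ω in E ∩ Zp X S0 (l+1) ⁻¹' B, f (Zp X S0 (l+1) ω) ∂μ =
      ∫⁻ ω in E, ∫⁻ z, f z ∂(Kr P hB (Zp X S0 l ω)) ∂μ := by
  simp_rw [Kr_lintegral P hB]
  rw [← one_step hX hS0 hMk hl hE (hf.indicator hB), inter_comm,
    ← Measure.restrict_restrict (Z_meas (ℱ := ℱ) hX hS0 (l+1) hB),
    ← lintegral_indicator (Z_meas (ℱ := ℱ) hX hS0 (l+1) hB)]
  rfl

lemma stay_law (hX : Adapted ℱ X) (hS0 : Measurable[ℱ 0] S0) (hMk : MkStep μ ℱ X P)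
    {l : ℕ} (hl : 1 ≤ l) {E : Set Ω} (hE : MeasurableSet[ℱ l] E) {B : Set (ℝ × ℝ)}
    (hB : MeasurableSet B) (a : ℕ) {f : ℝ × ℝ → ENNReal} (hf : Measurable f) :
    ∫⁻ ω in E ∩ stay X S0 B l a, f (Zp X S0 (l+a) ω) ∂μ =
      ∫⁻ ω in E, ∫⁻ z, f z ∂((Kr P hB ^ a) (Zp X S0 l ω)) ∂μ := by
  induction a generalizing f with
  | zero =>
    rw [stay_zero, inter_univ]
    refine lintegral_congr fun ω => ?_
    rw [kpow_zero_apply, lintegral_dirac' _ hf]; rfl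
  | succ a ih =>
    rw [stay_succ, ← inter_assoc, ← add_assoc, step_in hX hS0 hMk (by omega)
      (MeasurableSet.inter (ℱ.mono (by omega) _ hE) (stay_meas hX hS0 hB l a)) hB hf]
    rw [ih (f := fun z' => ∫⁻ z, f z ∂(Kr P hB z')) (Measurable.lintegral_kernel hf)]
    refine lintegral_congr fun ω => ?_
    rw [pow_succ']
    exact (Kernel.lintegral_comp _ _ _ hf).symm

end proc


lemma Gsum_lintegral {E : Type*} [MeasurableSpace E] (F K : Kernel E E) (z : E) {f : E → ENNReal}
    (hf : Measurable f) :
    ∫⁻ z', f z' ∂(Gsum F K z) = ∑' n, ∫⁻ z', ∫⁻ z'', f z'' ∂(F z') ∂((K ^ n) z) := by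
  unfold Gsum
  rw [Kernel.sum_apply, lintegral_sum_measure]
  exact tsum_congr fun n => Kernel.lintegral_comp _ _ _ hf

section proc
variable {Ω : Type*} {m0 : MeasurableSpace Ω} {μ : Measure Ω} [IsProbabilityMeasure μ]
  {P : Kernel ℝ ℝ} [IsMarkovKernel P] {ℱ : Filtration ℕ m0} {X : ℕ → Ω → ℝ} {S0 : Ω → ℝ}

def Cev (X : ℕ → Ω → ℝ) (S0 : Ω → ℝ) (l a b : ℕ) : Set Ω := {ω | Cpred (Swalk X S0 ω) l a b}

lemma Cev_eq (l a b : ℕ) : Cev X S0 l a b = ((stay X S0 Anon l a ∩ Zp X S0 (l+a+1) ⁻¹' Aneg) ∩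
    stay X S0 Anp (l+a+1) b) ∩ Zp X S0 (l+a+1+b+1) ⁻¹' Apos := by
  ext ω
  constructor
  · rintro ⟨h1, h2, h3, h4⟩; exact ⟨⟨⟨h1, h2⟩, h3⟩, h4⟩
  · rintro ⟨⟨⟨h1, h2⟩, h3⟩, h4⟩; exact ⟨h1, h2, h3, h4⟩

lemma Cev_meas (hX : Adapted ℱ X) (hS0 : Measurable[ℱ 0] S0) (l a b : ℕ) :
    MeasurableSet[ℱ (l+a+1+b+1)] (Cev X S0 l a b) := by
  rw [Cev_eq]
  refine MeasurableSet.inter (MeasurableSet.inter (MeasurableSet.inter ?_ ?_) ?_) ?_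
  · exact ℱ.mono (by omega) _ (stay_meas hX hS0 Anon_meas l a)
  · exact ℱ.mono (by omega) _ (Z_adapted hX hS0 (l+a+1) Aneg_meas)
  · exact ℱ.mono (by omega) _ (stay_meas hX hS0 Anp_meas (l+a+1) b)
  · exact Z_adapted hX hS0 _ Apos_meas

lemma C_law (hX : Adapted ℱ X) (hS0 : Measurable[ℱ 0] S0) (hMk : MkStep μ ℱ X P)
    {l : ℕ} (hl : 1 ≤ l) {E : Set Ω} (hE : MeasurableSet[ℱ l] E) (a b : ℕ)
    {f : ℝ × ℝ → ENNReal} (hf : Measurable f) :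
    ∫⁻ ω in E ∩ Cev X S0 l a b, f (Zp X S0 (l+a+1+b+1) ω) ∂μ =
      ∫⁻ ω in E, ∫⁻ z1, ∫⁻ z2, ∫⁻ z3, ∫⁻ z4, f z4 ∂(Kr P Apos_meas z3) ∂((Kr P Anp_meas ^ b) z2)
        ∂(Kr P Aneg_meas z1) ∂((Kr P Anon_meas ^ a) (Zp X S0 l ω)) ∂μ := by
  have m1 := MeasurableSet.inter (ℱ.mono (show l ≤ l + a by omega) _ hE) (stay_meas hX hS0 Anon_meas l a)
  have m2 := MeasurableSet.inter (ℱ.mono (show l + a ≤ l + a + 1 by omega) _ m1)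
    (Z_adapted hX hS0 (l+a+1) Aneg_meas)
  have m3 := MeasurableSet.inter (ℱ.mono (show l + a + 1 ≤ l + a + 1 + b by omega) _ m2)
    (stay_meas hX hS0 Anp_meas (l+a+1) b)
  have f1 : Measurable fun z3 => ∫⁻ z4, f z4 ∂(Kr P Apos_meas z3) := Measurable.lintegral_kernel hf
  have f2 : Measurable fun z2 => ∫⁻ z3, ∫⁻ z4, f z4 ∂(Kr P Apos_meas z3) ∂((Kr P Anp_meas ^ b) z2) :=
    Measurable.lintegral_kernel f1
  have f3 : Measurable fun z1 => ∫⁻ z2, ∫⁻ z3, ∫⁻ z4, f z4 ∂(Kr P Apos_meas z3) ∂((Kr P Anp_meas ^ b) z2)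
        ∂(Kr P Aneg_meas z1) := Measurable.lintegral_kernel f2
  rw [Cev_eq, ← inter_assoc, ← inter_assoc, ← inter_assoc,
    step_in hX hS0 hMk (by omega) m3 Apos_meas hf,
    stay_law hX hS0 hMk (by omega) m2 Anp_meas b f1,
    step_in hX hS0 hMk (by omega) m1 Aneg_meas f2,
    stay_law hX hS0 hMk hl hE Anon_meas a f3]

lemma C_sum_law (hX : Adapted ℱ X) (hS0 : Measurable[ℱ 0] S0) (hMk : MkStep μ ℱ X P)
    {l : ℕ} (hl : 1 ≤ l) {E : Set Ω} (hE : MeasurableSet[ℱ l] E)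
    {f : ℝ × ℝ → ENNReal} (hf : Measurable f) :
    ∑' a, ∑' b, ∫⁻ ω in E ∩ Cev X S0 l a b, f (Zp X S0 (l+a+1+b+1) ω) ∂μ =
      ∫⁻ ω in E, ∫⁻ z, f z ∂(Qk P (Zp X S0 l ω)) ∂μ := by
  simp_rw [C_law hX hS0 hMk hl hE _ _ hf]
  have hZ := Z_meas (ℱ := ℱ) hX hS0 l
  have f1 : Measurable fun z3 => ∫⁻ z4, f z4 ∂(Kr P Apos_meas z3) := Measurable.lintegral_kernel hf
  have f2 : ∀ b, Measurable fun z2 => ∫⁻ z3, ∫⁻ z4, f z4 ∂(Kr P Apos_meas z3) ∂((Kr P Anp_meas ^ b) z2) :=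
    fun b => Measurable.lintegral_kernel f1
  have f3 : ∀ b, Measurable fun z1 => ∫⁻ z2, ∫⁻ z3, ∫⁻ z4, f z4 ∂(Kr P Apos_meas z3) ∂((Kr P Anp_meas ^ b) z2)
        ∂(Kr P Aneg_meas z1) := fun b => Measurable.lintegral_kernel (f2 b)
  have f4 : ∀ a b, Measurable fun z0 => ∫⁻ z1, ∫⁻ z2, ∫⁻ z3, ∫⁻ z4, f z4 ∂(Kr P Apos_meas z3) ∂((Kr P Anp_meas ^ b) z2)
        ∂(Kr P Aneg_meas z1) ∂((Kr P Anon_meas ^ a) z0) := fun a b => Measurable.lintegral_kernel (f3 b)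
  have e : ∀ a, ∑' b, ∫⁻ ω in E, ∫⁻ z1, ∫⁻ z2, ∫⁻ z3, ∫⁻ z4, f z4 ∂(Kr P Apos_meas z3) ∂((Kr P Anp_meas ^ b) z2)
        ∂(Kr P Aneg_meas z1) ∂((Kr P Anon_meas ^ a) (Zp X S0 l ω)) ∂μ =
      ∫⁻ ω in E, ∫⁻ z1, ∫⁻ z, f z ∂((Dk P ∘ₖ Kr P Aneg_meas) z1) ∂((Kr P Anon_meas ^ a) (Zp X S0 l ω)) ∂μ := by
    intro a
    refine (lintegral_tsum (fun b => ((f4 a b).comp hZ).aemeasurable)).symm.trans ?_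
    refine lintegral_congr fun ω => ?_
    refine (lintegral_tsum (fun b => (f3 b).aemeasurable)).symm.trans ?_
    refine lintegral_congr fun z1 => ?_
    rw [← lintegral_tsum (fun b => (f2 b).aemeasurable), Kernel.lintegral_comp _ _ _ hf]
    refine lintegral_congr fun z2 => ?_
    exact (Gsum_lintegral _ _ _ hf).symm
  rw [tsum_congr e, ← lintegral_tsum]
  · refine lintegral_congr fun ω => ?_
    exact (Gsum_lintegral _ _ _ hf).symm
  · intro a
    refine Measurable.aemeasurable ?_
    refine (Measurable.lintegral_kernel (κ := Kr P Anon_meas ^ a)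
      (f := fun z1 => ∫⁻ z, f z ∂((Dk P ∘ₖ Kr P Aneg_meas) z1)) (Measurable.lintegral_kernel hf)).comp hZ

lemma leave (hX : Adapted ℱ X) (hS0 : Measurable[ℱ 0] S0) (hMk : MkStep μ ℱ X P)
    {B : Set (ℝ × ℝ)} (hB : MeasurableSet B) (hw : ∀ z, wI (Kr P hB) z = 0) :
    ∀ᵐ ω ∂μ, ∀ l, ∃ i, l < i ∧ Zp X S0 i ω ∉ B := by
  have hl1 : ∀ l, 1 ≤ l → ∀ᵐ ω ∂μ, ∃ i, l < i ∧ Zp X S0 i ω ∉ B := by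
    intro l hl
    rw [ae_iff]
    have hle : ∀ a, μ {ω | ¬ ∃ i, l < i ∧ Zp X S0 i ω ∉ B} ≤ ∫⁻ ω, (Kr P hB ^ a) (Zp X S0 l ω) univ ∂μ := by
      intro a
      have := stay_law (μ := μ) hX hS0 hMk hl (E := univ) MeasurableSet.univ hB a (f := fun _ => 1) measurable_const
      simp only [lintegral_const, one_mul, Measure.restrict_apply_univ, univ_inter, Measure.restrict_univ] at this
      rw [← this]
      refine measure_mono fun ω hω => ?_
      intro i hi _
      by_contra hc
      exact hω ⟨i, hi, hc⟩
    have h0 : ⨅ a, ∫⁻ ω, (Kr P hB ^ a) (Zp X S0 l ω) univ ∂μ = 0 := by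
      rw [← lintegral_iInf]
      · have : ∀ ω, ⨅ a, (Kr P hB ^ a) (Zp X S0 l ω) univ = 0 := fun ω => hw _
        simp [this]
      · intro a
        exact (Kernel.measurable_coe _ MeasurableSet.univ).comp (Z_meas (ℱ := ℱ) hX hS0 l)
      · intro a a' h ω
        exact kpow_anti _ (Kr_le P hB) _ h
      · refine ne_top_of_le_ne_top (b := ∫⁻ ω, 1 ∂μ) (by simp)
          (lintegral_mono fun ω => kpow_le_one _ (Kr_le P hB) _ _)
    exact le_antisymm ((le_iInf hle).trans h0.le) zero_le
  have := ae_all_iff.2 fun l => hl1 (l+1) (by omega)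
  filter_upwards [this] with ω hω l
  obtain ⟨i, hi, h⟩ := hω l
  exact ⟨i, by omega, h⟩

variable {M h : ℝ} {c : ENNReal}

lemma recur (hP : GoodK P M h c) (hX : Adapted ℱ X) (hS0 : Measurable[ℱ 0] S0) (hMk : MkStep μ ℱ X P) :
    ∀ᵐ ω ∂μ, ∀ l, (∃ i, l < i ∧ Swalk X S0 ω i < 0) ∧ (∃ i, l < i ∧ 0 < Swalk X S0 ω i) := by
  filter_upwards [leave hX hS0 hMk Anon_meas hP.wI_non, leave hX hS0 hMk Anp_meas hP.wI_np] with ω h1 h2 l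
  obtain ⟨i, hi, hi'⟩ := h1 l
  obtain ⟨j, hj, hj'⟩ := h2 l
  exact ⟨⟨i, hi, not_le.1 hi'⟩, ⟨j, hj, not_le.1 hj'⟩⟩

def Rev (X : ℕ → Ω → ℝ) (S0 : Ω → ℝ) (n l : ℕ) : Set Ω := {ω | Rp (Swalk X S0 ω) n l}

noncomputable def Lup (X : ℕ → Ω → ℝ) (S0 : Ω → ℝ) (n : ℕ) (ω : Ω) : ℕ :=
  (crossTimes 0 0 (Swalk X S0 ω) n).2

noncomputable def Yp (X : ℕ → Ω → ℝ) (S0 : Ω → ℝ) (n : ℕ) (ω : Ω) : ℝ × ℝ :=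
  Zp X S0 (Lup X S0 n ω) ω

def Nice (ℱ : Filtration ℕ m0) (X : ℕ → Ω → ℝ) (S0 : Ω → ℝ) (n : ℕ) (E : Set Ω) : Prop :=
  ∀ l, MeasurableSet[ℱ l] (E ∩ Rev X S0 n l)

lemma Nice.succ (hX : Adapted ℱ X) (hS0 : Measurable[ℱ 0] S0) {n : ℕ} {E : Set Ω}
    (h : Nice ℱ X S0 n E) : Nice ℱ X S0 (n+1) E := by
  intro l
  have e : E ∩ Rev X S0 (n+1) l = ⋃ (m : ℕ) (a : ℕ) (b : ℕ) (_ : m + a + 1 + b + 1 = l),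
      (E ∩ Rev X S0 n m) ∩ Cev X S0 m a b := by
    ext ω
    simp only [mem_iUnion]
    constructor
    · rintro ⟨h1, m, a, b, e, h2, h3⟩
      exact ⟨m, a, b, e, ⟨h1, h2⟩, h3⟩
    · rintro ⟨m, a, b, e, ⟨h1, h2⟩, h3⟩
      exact ⟨h1, m, a, b, e, h2, h3⟩
  rw [e]
  refine MeasurableSet.iUnion fun m => MeasurableSet.iUnion fun a => MeasurableSet.iUnion fun b =>
    MeasurableSet.iUnion fun e => ?_
  subst e
  exact MeasurableSet.inter (ℱ.mono (by omega) _ (h m)) (Cev_meas hX hS0 m a b)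

lemma nice_zero : Nice ℱ X S0 0 univ := by
  intro l
  by_cases h : l = 0
  · have : Rev X S0 0 l = univ := by ext ω; simp [Rev, Rp, h]
    rw [this]; simp
  · have : Rev X S0 0 l = ∅ := by ext ω; simp [Rev, Rp, h]
    rw [this]; simp

lemma nice_univ (hX : Adapted ℱ X) (hS0 : Measurable[ℱ 0] S0) (n : ℕ) : Nice ℱ X S0 n univ := by
  induction n with
  | zero => exact nice_zero
  | succ n ih => exact ih.succ hX hS0

lemma nice_Y (hX : Adapted ℱ X) (hS0 : Measurable[ℱ 0] S0) (n : ℕ) {B : Set (ℝ × ℝ)}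
    (hB : MeasurableSet B) : Nice ℱ X S0 n (Yp X S0 n ⁻¹' B) := by
  intro l
  have e : Yp X S0 n ⁻¹' B ∩ Rev X S0 n l = Zp X S0 l ⁻¹' B ∩ (univ ∩ Rev X S0 n l) := by
    ext ω
    simp only [univ_inter, mem_inter_iff, and_congr_left_iff, mem_preimage]
    intro hω
    have : Lup X S0 n ω = l := Rp.cross hω
    unfold Yp
    rw [this]
  rw [e]
  exact MeasurableSet.inter (Z_adapted hX hS0 l hB) (nice_univ hX hS0 n l)

lemma nice_sum (hP : GoodK P M h c) (hX : Adapted ℱ X) (hS0 : Measurable[ℱ 0] S0)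
    (hMk : MkStep μ ℱ X P) {n : ℕ} {E : Set Ω} (hE : Nice ℱ X S0 n E) (g : Ω → ENNReal) :
    ∫⁻ ω in E, g ω ∂μ = ∑' l, ∫⁻ ω in E ∩ Rev X S0 n l, g ω ∂μ := by
  rw [← lintegral_iUnion (fun l => ℱ.le l _ (hE l))]
  · refine setLIntegral_congr ?_
    filter_upwards [recur hP hX hS0 hMk] with ω hω
    refine propext ⟨fun h => ?_, fun h => ?_⟩
    · obtain ⟨l, hl⟩ := Rp.exists hω n
      exact mem_iUnion.2 ⟨l, h, hl⟩
    · obtain ⟨l, hl⟩ := mem_iUnion.1 h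
      exact hl.1
  · intro l l' hll
    rw [Function.onFun, Set.disjoint_left]
    rintro ω ⟨_, h1⟩ ⟨_, h2⟩
    exact hll ((Rp.cross h1).symm.trans (Rp.cross h2))

lemma Y_law1 (hP : GoodK P M h c) (hX : Adapted ℱ X) (hS0 : Measurable[ℱ 0] S0)
    (hMk : MkStep μ ℱ X P) {n : ℕ} (hn : 1 ≤ n) {E : Set Ω} (hE : Nice ℱ X S0 n E)
    {f : ℝ × ℝ → ENNReal} (hf : Measurable f) :
    ∫⁻ ω in E, f (Yp X S0 (n+1) ω) ∂μ = ∫⁻ ω in E, ∫⁻ z, f z ∂(Qk P (Yp X S0 n ω)) ∂μ := by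
  rw [nice_sum hP hX hS0 hMk hE, nice_sum hP hX hS0 hMk hE]
  refine tsum_congr fun l => ?_
  obtain ⟨n, rfl⟩ : ∃ k, n = k + 1 := ⟨n - 1, by omega⟩
  by_cases hl : l < 2
  · have : E ∩ Rev X S0 (n+1) l = ∅ := by
      ext ω
      simp only [mem_inter_iff, mem_empty_iff_false, iff_false, not_and]
      intro _ h2
      have := Rp.two_le h2
      omega
    rw [this]; simp
  push Not at hl
  have hm := ℱ.le l _ (hE l)
  have e1 : ∫⁻ ω in E ∩ Rev X S0 (n+1) l, ∫⁻ z, f z ∂(Qk P (Yp X S0 (n+1) ω)) ∂μ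
      = ∫⁻ ω in E ∩ Rev X S0 (n+1) l, ∫⁻ z, f z ∂(Qk P (Zp X S0 l ω)) ∂μ := by
    refine setLIntegral_congr_fun hm fun ω hω => ?_
    have : Lup X S0 (n+1) ω = l := Rp.cross hω.2
    unfold Yp
    simp only [this]
  rw [e1, ← C_sum_law hX hS0 hMk (by omega) (hE l) hf]
  have e2 : ∀ a b, ∫⁻ ω in (E ∩ Rev X S0 (n+1) l) ∩ Cev X S0 l a b, f (Zp X S0 (l+a+1+b+1) ω) ∂μ
      = ∫⁻ ω in (E ∩ Rev X S0 (n+1) l) ∩ Cev X S0 l a b, f (Yp X S0 (n+1+1) ω) ∂μ := by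
    intro a b
    refine setLIntegral_congr_fun (hm.inter (ℱ.le _ _ (Cev_meas hX hS0 l a b))) fun ω hω => ?_
    have : Lup X S0 (n+1+1) ω = l + a + 1 + b + 1 := by
      unfold Lup
      rw [Cpred.cross hω.2 (Rp.cross hω.1.2)]
    unfold Yp
    simp only [this]
  simp_rw [e2]
  rw [← ENNReal.tsum_prod (f := fun a b => ∫⁻ ω in (E ∩ Rev X S0 (n+1) l) ∩ Cev X S0 l a b, f (Yp X S0 (n+1+1) ω) ∂μ),
    ← lintegral_iUnion (fun p : ℕ × ℕ => hm.inter (ℱ.le _ _ (Cev_meas hX hS0 l p.1 p.2)))]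
  · refine setLIntegral_congr ?_
    filter_upwards [recur hP hX hS0 hMk] with ω hω
    refine propext ⟨fun h => ?_, fun h => ?_⟩
    · obtain ⟨a, b, hab⟩ := Cpred.exists hω l
      exact mem_iUnion.2 ⟨(a, b), h, hab⟩
    · obtain ⟨l, hl⟩ := mem_iUnion.1 h
      exact hl.1
  · rintro ⟨a, b⟩ ⟨a', b'⟩ hne
    rw [Function.onFun, Set.disjoint_left]
    rintro ω ⟨_, h1⟩ ⟨_, h2⟩
    obtain ⟨r1, r2⟩ := Cpred.unique h1 h2
    exact hne (Prod.ext r1 r2)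

end proc


lemma nat_sInf_meas {Ω : Type*} [MeasurableSpace Ω] {p : ℕ → Ω → Prop}
    (hp : ∀ k, MeasurableSet {ω | p k ω}) : Measurable fun ω => sInf {k | p k ω} := by
  refine measurable_to_countable' fun m => ?_
  have e : (fun ω => sInf {k | p k ω}) ⁻¹' {m} =
      ({ω | p m ω} ∩ ⋂ j, ⋂ (_ : j < m), {ω | p j ω}ᶜ) ∪ ({_ω | m = 0} ∩ ⋂ j, {ω | p j ω}ᶜ) := by
    ext ω
    simp only [mem_preimage, mem_singleton_iff, mem_union, mem_inter_iff, mem_iInter, mem_compl_iff]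
    constructor
    · intro h
      by_cases hne : ({k | p k ω} : Set ℕ).Nonempty
      · left
        refine ⟨?_, fun j hj hj' => ?_⟩
        · have := Nat.sInf_mem hne
          rw [h] at this; exact this
        · have := Nat.sInf_le (s := {k | p k ω}) hj'
          omega
      · right
        rw [not_nonempty_iff_eq_empty] at hne
        refine ⟨?_, fun j hj => ?_⟩
        · rw [hne, Nat.sInf_empty] at h; exact h.symm
        · have : j ∈ ({k | p k ω} : Set ℕ) := hj
          rw [hne] at this; exact this
    · rintro (⟨h1, h2⟩ | ⟨h1, h2⟩)
      · refine nat_sInf_eq h1 fun j hj => ?_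
        by_contra hc
        exact h2 j (by omega) hj
      · have : ({k | p k ω} : Set ℕ) = ∅ := by
          ext j; simp only [mem_empty_iff_false, iff_false]; exact h2 j
        rw [this, Nat.sInf_empty]; exact h1.symm
  rw [e]
  refine MeasurableSet.union (MeasurableSet.inter (hp m) ?_) (MeasurableSet.inter (MeasurableSet.const _) ?_)
  · exact MeasurableSet.iInter fun j => MeasurableSet.iInter fun _ => (hp j).compl
  · exact MeasurableSet.iInter fun j => (hp j).compl

section proc
variable {Ω : Type*} {m0 : MeasurableSpace Ω} {μ : Measure Ω} [IsProbabilityMeasure μ]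
  {P : Kernel ℝ ℝ} [IsMarkovKernel P] {ℱ : Filtration ℕ m0} {X : ℕ → Ω → ℝ} {S0 : Ω → ℝ}
  {M h : ℝ} {c : ENNReal}

lemma L_meas (hX : Adapted ℱ X) (hS0 : Measurable[ℱ 0] S0) (n : ℕ) : Measurable (Lup X S0 n) := by
  have hS : ∀ k, Measurable fun ω => Swalk X S0 ω k := fun k => (S_adapted hX hS0 k).mono (ℱ.le k) le_rfl
  induction n with
  | zero => exact measurable_const
  | succ n ih =>
    unfold Lup
    simp only [crossTimes]
    have hT : Measurable fun ω => sInf {k | (crossTimes 0 0 (Swalk X S0 ω) n).2 < k ∧ Swalk X S0 ω k < 0} := by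
      refine nat_sInf_meas fun k => ?_
      exact (measurableSet_lt ih (measurable_const (a := k))).inter (measurableSet_lt (hS k) (measurable_const (a := (0:ℝ))))
    refine nat_sInf_meas fun k => ?_
    exact (measurableSet_lt hT (measurable_const (a := k))).inter (measurableSet_lt (measurable_const (a := (0:ℝ))) (hS k))

lemma Y_meas (hX : Adapted ℱ X) (hS0 : Measurable[ℱ 0] S0) (n : ℕ) : Measurable (Yp X S0 n) := by
  have : Measurable fun p : ℕ × Ω => Zp X S0 p.1 p.2 :=
    measurable_from_prod_countable_right fun l => Z_meas (ℱ := ℱ) hX hS0 l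
  exact this.comp ((L_meas hX hS0 n).prodMk measurable_id)

lemma Y_range (hP : GoodK P M h c) (hX : Adapted ℱ X) (hS0 : Measurable[ℱ 0] S0)
    (hMk : MkStep μ ℱ X P) (hb : ∀ n, 1 ≤ n → ∀ ω, X n ω ≤ M) {n : ℕ} (hn : 1 ≤ n) :
    ∀ᵐ ω ∂μ, 0 < (Yp X S0 n ω).2 ∧ (Yp X S0 n ω).2 ≤ M := by
  obtain ⟨n, rfl⟩ : ∃ k, n = k + 1 := ⟨n - 1, by omega⟩
  filter_upwards [recur hP hX hS0 hMk] with ω hω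
  obtain ⟨l, hl⟩ := Rp.exists hω (n+1)
  have e : Lup X S0 (n+1) ω = l := Rp.cross hl
  have h2 := hl.two_le
  obtain ⟨h3, h4⟩ := hl.pos
  unfold Yp
  rw [e]
  refine ⟨h3, ?_⟩
  obtain ⟨l, rfl⟩ : ∃ k, l = k + 1 := ⟨l - 1, by omega⟩
  change Swalk X S0 ω (l+1) ≤ M
  rw [Swalk_succ]
  have := hb (l+1) (by omega) ω
  simp only [Nat.add_sub_cancel] at h4
  linarith

lemma Nice.add (hX : Adapted ℱ X) (hS0 : Measurable[ℱ 0] S0) {n : ℕ} {E : Set Ω}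
    (h : Nice ℱ X S0 n E) (k : ℕ) : Nice ℱ X S0 (n+k) E := by
  induction k with
  | zero => exact h
  | succ k ih => exact ih.succ hX hS0

lemma Y_law (hP : GoodK P M h c) (hX : Adapted ℱ X) (hS0 : Measurable[ℱ 0] S0)
    (hMk : MkStep μ ℱ X P) (hb : ∀ n, 1 ≤ n → ∀ ω, X n ω ≤ M)
    {n : ℕ} (hn : 1 ≤ n) {E : Set Ω} (hE : Nice ℱ X S0 n E) (k : ℕ)
    {f : ℝ × ℝ → ENNReal} (hf : Measurable f) :
    ∫⁻ ω in E, f (Yp X S0 (n+k) ω) ∂μ = ∫⁻ ω in E, ∫⁻ z, f z ∂((Qc P M ^ k) (Yp X S0 n ω)) ∂μ := by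
  induction k generalizing f with
  | zero =>
    refine lintegral_congr fun ω => ?_
    rw [kpow_zero_apply, lintegral_dirac' _ hf]; rfl
  | succ k ih =>
    rw [← add_assoc, Y_law1 hP hX hS0 hMk (by omega) (hE.add hX hS0 k) hf]
    have e : ∫⁻ ω in E, ∫⁻ z, f z ∂(Qk P (Yp X S0 (n+k) ω)) ∂μ =
        ∫⁻ ω in E, ∫⁻ z, f z ∂(Qc P M (Yp X S0 (n+k) ω)) ∂μ := by
      refine lintegral_congr_ae (ae_restrict_of_ae ?_)
      filter_upwards [Y_range hP hX hS0 hMk hb (n := n+k) (by omega)] with ω hω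
      rw [Qc_eq _ hω.1.le hω.2]
    rw [e, ih (f := fun z' => ∫⁻ z, f z ∂(Qc P M z')) (Measurable.lintegral_kernel hf)]
    refine lintegral_congr fun ω => ?_
    rw [pow_succ']
    exact (Kernel.lintegral_comp _ _ _ hf).symm

lemma Y_joint (hP : GoodK P M h c) (hX : Adapted ℱ X) (hS0 : Measurable[ℱ 0] S0)
    (hMk : MkStep μ ℱ X P) (hb : ∀ n, 1 ≤ n → ∀ ω, X n ω ≤ M)
    {n : ℕ} (hn : 1 ≤ n) (k : ℕ) :
    μ.map (fun ω => (Yp X S0 n ω, Yp X S0 (n+k) ω)) = (μ.map (Yp X S0 n)) ⊗ₘ (Qc P M ^ k) := by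
  have := hP.Qc_markov
  have := markov_pow (Qc P M) k
  have hY := fun n => Y_meas (ℱ := ℱ) hX hS0 n
  have hpr : IsProbabilityMeasure (μ.map (Yp X S0 n)) := Measure.isProbabilityMeasure_map (hY n).aemeasurable
  refine Measure.ext_prod fun {B A} hB hA => ?_
  rw [Measure.map_apply ((hY n).prodMk (hY (n+k))) (hB.prod hA), Measure.compProd_apply_prod hB hA,
    setLIntegral_map hB (Kernel.measurable_coe _ hA) (hY n)]
  have h1 := Y_law hP hX hS0 hMk hb hn (nice_Y (ℱ := ℱ) hX hS0 n hB) k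
    (f := A.indicator 1) (measurable_const.indicator hA)
  simp_rw [lintegral_indicator_one hA] at h1
  rw [← h1]
  have e : (fun ω => (A.indicator (1 : ℝ × ℝ → ENNReal) (Yp X S0 (n+k) ω))) =
    (Yp X S0 (n+k) ⁻¹' A).indicator 1 := by ext ω; rfl
  rw [e, lintegral_indicator_one ((hY _) hA), Measure.restrict_apply (hY _ hA), inter_comm]
  rfl

lemma Y_tv (hP : GoodK P M h c) (hX : Adapted ℱ X) (hS0 : Measurable[ℱ 0] S0)
    (hMk : MkStep μ ℱ X P) (hb : ∀ n, 1 ≤ n → ∀ ω, X n ω ≤ M)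
    {π : Measure (ℝ × ℝ)} [IsProbabilityMeasure π] {r : ℝ}
    (hπ : ∀ n y A, MeasurableSet A → |((Qc P M ^ n) y).real A - π.real A| ≤ r^n)
    (n : ℕ) {A : Set (ℝ × ℝ)} (hA : MeasurableSet A) :
    |(μ (Yp X S0 (1+n) ⁻¹' A)).toReal - π.real A| ≤ r ^ n := by
  have := hP.Qc_markov
  have := markov_pow (Qc P M) n
  have hY := fun n => Y_meas (ℱ := ℱ) hX hS0 n
  have h1 := Y_law hP hX hS0 hMk hb le_rfl (nice_univ (ℱ := ℱ) hX hS0 1) n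
    (f := A.indicator 1) (measurable_const.indicator hA)
  simp_rw [lintegral_indicator_one hA] at h1
  have e : (fun ω => (A.indicator (1 : ℝ × ℝ → ENNReal) (Yp X S0 (1+n) ω))) =
    (Yp X S0 (1+n) ⁻¹' A).indicator 1 := by ext ω; rfl
  rw [e, lintegral_indicator_one ((hY _) hA), Measure.restrict_univ] at h1
  have hm : Measurable fun ω => (Qc P M ^ n) (Yp X S0 1 ω) A := (Kernel.measurable_coe _ hA).comp (hY 1)
  have hbd : ∀ y, ‖((Qc P M ^ n) y).real A‖ ≤ 1 := fun y => by
    rw [Real.norm_of_nonneg measureReal_nonneg]; exact measureReal_le_one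
  have hInt0 : Integrable (fun ω => ((Qc P M ^ n) (Yp X S0 1 ω)).real A) μ :=
    Integrable.of_bound hm.ennreal_toReal.aestronglyMeasurable 1 (ae_of_all _ fun ω => hbd _)
  rw [h1, ← integral_toReal hm.aemeasurable (ae_of_all _ fun ω => measure_lt_top _ _)]
  have e2 : π.real A = ∫ ω, π.real A ∂μ := by simp
  rw [e2, ← integral_sub (by exact hInt0) (integrable_const _)]
  have := norm_integral_le_of_norm_le_const (μ := μ) (C := r^n)
    (f := fun ω => ((Qc P M ^ n) (Yp X S0 1 ω) A).toReal - π.real A) (ae_of_all _ fun ω => hπ n _ A hA)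
  simpa using this

lemma Y_corr (hP : GoodK P M h c) (hX : Adapted ℱ X) (hS0 : Measurable[ℱ 0] S0)
    (hMk : MkStep μ ℱ X P) (hb : ∀ n, 1 ≤ n → ∀ ω, X n ω ≤ M)
    {π : Measure (ℝ × ℝ)} [IsProbabilityMeasure π] {r : ℝ}
    (hπ : ∀ n y A, MeasurableSet A → |((Qc P M ^ n) y).real A - π.real A| ≤ r^n)
    {g : ℝ × ℝ → ℝ} (hg : Measurable g) {K : ℝ} (hK : ∀ z, |g z| ≤ K) (h0 : ∫ z, g z ∂π = 0)
    {n : ℕ} (hn : 1 ≤ n) (k : ℕ) :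
    |∫ ω, g (Yp X S0 n ω) * g (Yp X S0 (n+k) ω) ∂μ| ≤ K * (2 * K * r ^ k) := by
  have := hP.Qc_markov
  have := markov_pow (Qc P M) k
  have hY := fun n => Y_meas (ℱ := ℱ) hX hS0 n
  have hpr : IsProbabilityMeasure (μ.map (Yp X S0 n)) := Measure.isProbabilityMeasure_map (hY n).aemeasurable
  have hK0 : 0 ≤ K := (abs_nonneg _).trans (hK 0)
  have hgm : Measurable fun p : (ℝ × ℝ) × (ℝ × ℝ) => g p.1 * g p.2 := by fun_prop
  have e1 : ∫ ω, g (Yp X S0 n ω) * g (Yp X S0 (n+k) ω) ∂μ =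
      ∫ p, g p.1 * g p.2 ∂(μ.map (fun ω => (Yp X S0 n ω, Yp X S0 (n+k) ω))) := by
    rw [integral_map ((hY n).prodMk (hY _)).aemeasurable hgm.aestronglyMeasurable]
  rw [e1, Y_joint hP hX hS0 hMk hb hn k, Measure.integral_compProd]
  · simp_rw [integral_const_mul]
    have := norm_integral_le_of_norm_le_const (μ := μ.map (Yp X S0 n)) (C := K * (2 * K * r ^ k))
      (f := fun y => g y * ∫ z, g z ∂((Qc P M ^ k) y)) (ae_of_all _ fun y => ?_)
    · simpa using this
    rw [norm_mul]
    have h2 := tv_integral_le' ((Qc P M ^ k) y) π (r ^ k) (fun A hA => hπ k y A hA) g hg K hK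
    rw [h0, sub_zero] at h2
    exact mul_le_mul (hK y) h2 (abs_nonneg _) hK0
  · refine Integrable.of_bound hgm.aestronglyMeasurable (K * K) (ae_of_all _ fun p => ?_)
    rw [norm_mul]
    exact mul_le_mul (hK _) (hK _) (abs_nonneg _) hK0

end proc


section lln
variable {Ω : Type*} {m0 : MeasurableSpace Ω} {μ : Measure Ω} [IsProbabilityMeasure μ]

lemma lln_var {f : ℕ → Ω → ℝ} (hf : ∀ j, Measurable (f j)) {K : ℝ} (hK : ∀ j ω, |f j ω| ≤ K)
    {C r : ℝ} (hC : 0 ≤ C) (hr0 : 0 ≤ r) (hr1 : r < 1)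
    (hc : ∀ i k, |∫ ω, f i ω * f (i+k) ω ∂μ| ≤ C * r ^ k) (n : ℕ) :
    ∫ ω, (∑ i ∈ Finset.range n, f i ω) ^ 2 ∂μ ≤ n * (2 * (C * (1 - r)⁻¹) + C) := by
  have hInt0 : ∀ i j, Integrable (fun ω => f i ω * f j ω) μ := fun i j => by
    refine Integrable.of_bound ((hf i).mul (hf j)).aestronglyMeasurable (K * K) (ae_of_all _ fun ω => ?_)
    rw [norm_mul]
    exact mul_le_mul (hK _ _) (hK _ _) (abs_nonneg _) ((abs_nonneg _).trans (hK i ω))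
  have hintS : ∀ n, Integrable (fun ω => (∑ i ∈ Finset.range n, f i ω) ^ 2) μ := fun n => by
    simp_rw [sq, Finset.sum_mul_sum]
    exact integrable_finsetSum _ fun i _ => integrable_finsetSum _ fun j _ => hInt0 i j
  induction n with
  | zero => simp
  | succ n ih =>
    have e : ∀ ω, (∑ i ∈ Finset.range (n+1), f i ω) ^ 2 = (∑ i ∈ Finset.range n, f i ω) ^ 2 +
        (2 * ∑ i ∈ Finset.range n, f i ω * f n ω + f n ω * f n ω) := by
      intro ω
      rw [Finset.sum_range_succ, ← Finset.sum_mul]; ring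
    have i1 : Integrable (fun ω => ∑ i ∈ Finset.range n, f i ω * f n ω) μ :=
      integrable_finsetSum _ fun i _ => hInt0 i n
    simp_rw [e]
    have i2 : Integrable (fun ω => 2 * ∑ i ∈ Finset.range n, f i ω * f n ω + f n ω * f n ω) μ :=
      (i1.const_mul 2).add (hInt0 n n)
    rw [integral_add (hintS n) i2, integral_add (i1.const_mul 2) (hInt0 n n),
      integral_const_mul, integral_finsetSum _ fun i _ => hInt0 i n]
    have h1 : ∫ ω, f n ω * f n ω ∂μ ≤ C := by
      have := (le_abs_self _).trans (hc n 0)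
      simpa using this
    have h2 : ∑ i ∈ Finset.range n, ∫ ω, f i ω * f n ω ∂μ ≤ C * (1 - r)⁻¹ := by
      calc ∑ i ∈ Finset.range n, ∫ ω, f i ω * f n ω ∂μ ≤ ∑ i ∈ Finset.range n, C * r ^ (n - 1 - i) := by
            refine Finset.sum_le_sum fun i hi => ?_
            have hi := Finset.mem_range.1 hi
            have := (le_abs_self _).trans (hc i (n - i))
            rw [show i + (n - i) = n by omega] at this
            refine this.trans ?_
            gcongr C * ?_
            exact pow_le_pow_of_le_one hr0 hr1.le (by omega)
        _ = C * ∑ i ∈ Finset.range n, r ^ i := by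
            rw [← Finset.mul_sum, Finset.sum_range_reflect (fun i => r ^ i) n]
        _ ≤ C * (1 - r)⁻¹ := by
            gcongr
            rw [← tsum_geometric_of_lt_one hr0 hr1]
            exact Summable.sum_le_tsum _ (fun i _ => by positivity) (summable_geometric_of_lt_one hr0 hr1)
    push_cast
    linarith

lemma lln {f : ℕ → Ω → ℝ} (hf : ∀ j, Measurable (f j)) {K : ℝ} (hK : ∀ j ω, |f j ω| ≤ K)
    {C r : ℝ} (hC : 0 ≤ C) (hr0 : 0 ≤ r) (hr1 : r < 1)
    (hc : ∀ i k, |∫ ω, f i ω * f (i+k) ω ∂μ| ≤ C * r ^ k) :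
    ∀ᵐ ω ∂μ, Tendsto (fun n : ℕ => (∑ i ∈ Finset.range n, f i ω) / (n : ℝ)) atTop (nhds 0) := by
  set D := 2 * (C * (1 - r)⁻¹) + C with hD
  have hD0 : 0 ≤ D := by
    have : 0 ≤ (1 - r)⁻¹ := inv_nonneg.2 (by linarith)
    positivity
  set A : ℕ → Ω → ℝ := fun n ω => ∑ i ∈ Finset.range n, f i ω with hA
  have hAm : ∀ n, Measurable (A n) := fun n => Finset.measurable_sum _ fun i _ => hf i
  have hAb : ∀ n ω, |A n ω| ≤ n * K := fun n ω => by
    refine (Finset.abs_sum_le_sum_abs _ _).trans ?_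
    refine (Finset.sum_le_sum fun i _ => hK i ω).trans ?_
    simp
  have hsq : ∀ m : ℕ, ∫⁻ ω, ENNReal.ofReal ((A (m^2) ω / ((m^2 : ℕ) : ℝ)) ^ 2) ∂μ ≤ ENNReal.ofReal (D * (1 / (m:ℝ) ^ 2)) := by
    intro m
    have hi : Integrable (fun ω => (A (m^2) ω / ((m^2 : ℕ) : ℝ)) ^ 2) μ := by
      refine Integrable.of_bound (by have := hAm (m^2); fun_prop) (K ^ 2) (ae_of_all _ fun ω => ?_)
      rw [Real.norm_eq_abs, abs_pow, abs_div, Nat.abs_cast]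
      gcongr
      rcases Nat.eq_zero_or_pos m with rfl | hm
      · simp; exact (abs_nonneg _).trans (hK 0 ω)
      · rw [div_le_iff₀ (by positivity), mul_comm]; exact hAb _ ω
    rw [← ofReal_integral_eq_lintegral_ofReal hi (ae_of_all _ fun ω => sq_nonneg _)]
    apply ENNReal.ofReal_le_ofReal
    simp_rw [div_pow]
    rw [integral_div]
    have hv := lln_var hf hK hC hr0 hr1 hc (m^2)
    rcases Nat.eq_zero_or_pos m with rfl | hm
    · simp
    rw [div_le_iff₀ (by positivity)]
    refine hv.trans (le_of_eq ?_)
    rw [← hD]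
    push_cast
    field_simp
  have hsum : ∫⁻ ω, ∑' m : ℕ, ENNReal.ofReal ((A (m^2) ω / ((m^2 : ℕ) : ℝ)) ^ 2) ∂μ ≠ ⊤ := by
    rw [lintegral_tsum (fun m => by have := hAm (m^2); fun_prop)]
    refine ne_top_of_le_ne_top ?_ (ENNReal.tsum_le_tsum hsq)
    have hs : Summable fun m : ℕ => D * (1 / (m:ℝ) ^ 2) :=
      (Real.summable_one_div_nat_pow.2 (by norm_num)).mul_left D
    rw [← ENNReal.ofReal_tsum_of_nonneg (fun m => by positivity) hs]
    exact ENNReal.ofReal_ne_top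
  have hae := ae_lt_top' (AEMeasurable.ennreal_tsum fun m => by have := hAm (m^2); fun_prop) hsum
  filter_upwards [hae] with ω hω
  have t1 := ENNReal.tendsto_atTop_zero_of_tsum_ne_top hω.ne
  rw [← ENNReal.ofReal_zero] at t1
  have t2 : Tendsto (fun m : ℕ => (A (m^2) ω / ((m^2 : ℕ) : ℝ)) ^ 2) atTop (nhds 0) := by
    have := (ENNReal.tendsto_toReal ENNReal.ofReal_ne_top).comp t1
    simp only [ENNReal.ofReal_zero, ENNReal.toReal_zero] at this
    refine this.congr fun m => ?_
    exact ENNReal.toReal_ofReal (sq_nonneg _)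
  have t3 : Tendsto (fun m : ℕ => |A (m^2) ω / ((m^2 : ℕ) : ℝ)|) atTop (nhds 0) := by
    have := t2.sqrt
    simpa [Real.sqrt_sq_eq_abs] using this
  have t4 : Tendsto (fun m : ℕ => |A (m^2) ω / ((m^2 : ℕ) : ℝ)| + 2 * K / m) atTop (nhds 0) := by
    have := t3.add (tendsto_const_div_atTop_nhds_zero_nat (2 * K))
    simpa using this
  have ts : Tendsto Nat.sqrt atTop atTop := by
    refine tendsto_atTop_mono (f := Nat.sqrt) (fun n => le_rfl) ?_
    refine tendsto_atTop.2 fun b => ?_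
    filter_upwards [eventually_ge_atTop (b * b)] with n hn
    exact Nat.le_sqrt.2 hn
  refine squeeze_zero_norm' ?_ (t4.comp ts)
  filter_upwards [eventually_ge_atTop 1] with n hn
  simp only [Function.comp]
  set m := Nat.sqrt n with hm
  have hm1 : 1 ≤ m := Nat.le_sqrt.2 (by omega)
  have hmn : m ^ 2 ≤ n := Nat.sqrt_le' n
  have hmn2 : n ≤ m * m + m + m := Nat.sqrt_le_add n
  have hK0 : 0 ≤ K := (abs_nonneg _).trans (hK 0 ω)
  have hdiff : |A n ω - A (m^2) ω| ≤ 2 * m * K := by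
    have : A n ω - A (m^2) ω = ∑ i ∈ Finset.Ico (m^2) n, f i ω := (Finset.sum_Ico_eq_sub _ hmn).symm
    rw [this]
    refine (Finset.abs_sum_le_sum_abs _ _).trans ?_
    refine (Finset.sum_le_sum fun i _ => hK i ω).trans ?_
    rw [Finset.sum_const, Nat.card_Ico, nsmul_eq_mul]
    gcongr
    have : n - m ^ 2 ≤ 2 * m := by
      have : m ^ 2 = m * m := sq m
      omega
    exact_mod_cast this
  have hAn : |A n ω| ≤ |A (m^2) ω| + 2 * m * K := by
    have := abs_add_le (A n ω - A (m^2) ω) (A (m^2) ω)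
    rw [sub_add_cancel] at this
    linarith
  have hm0 : (0:ℝ) < m := by exact_mod_cast hm1
  have hmn' : ((m^2 : ℕ) : ℝ) ≤ n := by exact_mod_cast hmn
  have hmp : (0:ℝ) < ((m^2 : ℕ) : ℝ) := by positivity
  change ‖A n ω / n‖ ≤ _
  rw [Real.norm_eq_abs, abs_div, abs_div, Nat.abs_cast, Nat.abs_cast]
  calc |A n ω| / n ≤ |A n ω| / ((m^2 : ℕ) : ℝ) := by gcongr
    _ ≤ (|A (m^2) ω| + 2 * m * K) / ((m^2 : ℕ) : ℝ) := by gcongr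
    _ = _ := by
      push_cast
      field_simp

end lln


/-- Stability of overshoots: under the minorization and zero conditional mean conditions,
`Law(Oₙ)` converges in total variation at a geometric rate to a probability measure `υ`
concentrated on `(0,∞)`, and ergodic averages of bounded measurable functions of the
overshoots converge almost surely. -/
theorem stmt11 {Ω : Type*} {m0 : MeasurableSpace Ω} {μ : Measure Ω} [IsProbabilityMeasure μ]
    (M h α : ℝ) (hM : 0 < M) (hh : 0 < h) (hα : 0 < α)
    (P : Kernel ℝ ℝ) [IsMarkovKernel P]
    (hstate : ∀ x ≤ M, P x (Set.Ioi M) = 0)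
    (hmino : ∀ x ≤ M, ∀ A : Set ℝ, MeasurableSet A →
      ENNReal.ofReal α * unifIcc h A ≤ P x A)
    (hmean : ∀ z ≤ M, Integrable (fun x => x) (P z) ∧ ∫ x, x ∂(P z) = 0)
    (ℱ : Filtration ℕ m0) (X : ℕ → Ω → ℝ) (S0 : Ω → ℝ)
    (hX : Adapted ℱ X) (hS0 : Measurable[ℱ 0] S0)
    (hbound : ∀ n, 1 ≤ n → ∀ ω, X n ω ≤ M)
    (hMarkov : ∀ n : ℕ, ∀ A : Set ℝ, MeasurableSet A →
      (μ[fun ω => A.indicator (fun _ => (1 : ℝ)) (X (n + 1) ω) | ℱ n])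
        =ᵐ[μ] fun ω => (P (X n ω) A).toReal) :
    ∃ υ : Measure ℝ, IsProbabilityMeasure υ ∧ υ (Set.Iic 0) = 0 ∧
      (∃ C r : ℝ, 0 ≤ C ∧ 0 ≤ r ∧ r < 1 ∧
        ∀ n : ℕ, ∀ A : Set ℝ, MeasurableSet A →
          |(μ.map (Oproc X S0 n) A).toReal - (υ A).toReal| ≤ C * r ^ n) ∧
      ∀ φ : ℝ → ℝ, Measurable φ → (∃ K, ∀ u, |φ u| ≤ K) →
        ∀ᵐ ω ∂μ, Filter.Tendsto
          (fun n : ℕ => (∑ j ∈ Finset.Icc 1 n, φ (Oproc X S0 j ω)) / (n : ℝ))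
          Filter.atTop (nhds (∫ u, φ u ∂υ)) := by
  set c : ENNReal := ENNReal.ofReal α * (ENNReal.ofReal (2 * h))⁻¹ with hcdef
  set P' : Kernel ℝ ℝ := P.comap (fun x => min x M) (by fun_prop) with hP'
  have hP'a : ∀ x, P' x = P (min x M) := fun x => by rw [hP', Kernel.comap_apply]
  have hmk : IsMarkovKernel P' := by rw [hP']; infer_instance
  have hP : GoodK P' M h c := by
    refine ⟨hM, hh, ?_, fun x => ?_, fun x => ?_, fun x => ?_, fun x => ?_⟩
    · refine mul_ne_zero ?_ ?_
      · simpa using hα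
      · exact ENNReal.inv_ne_zero.2 ENNReal.ofReal_ne_top
    · rw [hP'a]; exact hstate _ (min_le_right _ _)
    · rw [hP'a]
      refine Measure.le_iff.2 fun A hA => ?_
      have := hmino (min x M) (min_le_right _ _) A hA
      unfold unifIcc at this
      rw [Measure.smul_apply, smul_eq_mul] at this ⊢
      rwa [← mul_assoc] at this
    · rw [hP'a]; exact (hmean _ (min_le_right _ _)).1
    · rw [hP'a]; exact (hmean _ (min_le_right _ _)).2
  have hMk : MkStep μ ℱ X P' := by
    intro n hn A hA
    refine (hMarkov n A hA).trans (ae_of_all _ fun ω => ?_)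
    simp only [hP'a, min_eq_left (hbound n hn ω)]
  obtain ⟨π, hπp, r, hr0, hr1, hπ⟩ := hP.Qc_ergodic
  have hY := fun n => Y_meas (ℱ := ℱ) hX hS0 n
  have hO : ∀ n, Oproc X S0 (n+1) = fun ω => (Yp X S0 (n+1) ω).2 := by
    intro n; ext ω; unfold Oproc; rw [if_neg (by omega)]; rfl
  have hOm : ∀ n, Measurable (Oproc X S0 n) := by
    intro n
    cases n with
    | zero =>
      have : Oproc X S0 0 = fun ω => max (S0 ω) 0 := by ext ω; unfold Oproc; rw [if_pos rfl]
      rw [this]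
      exact (hS0.mono (ℱ.le 0) le_rfl).max measurable_const
    | succ n => rw [hO]; exact (hY (n+1)).snd
  have htv : ∀ n (A : Set ℝ), MeasurableSet A →
      |(μ.map (Oproc X S0 (n+1)) A).toReal - (π.map Prod.snd A).toReal| ≤ r ^ n := by
    intro n A hA
    have := Y_tv hP hX hS0 hMk hbound hπ n (A := Prod.snd ⁻¹' A) (measurable_snd hA)
    rw [Measure.map_apply (hOm _) hA, Measure.map_apply measurable_snd hA, hO]
    rwa [add_comm 1 n] at this
  have hυp : IsProbabilityMeasure (π.map Prod.snd) :=
    Measure.isProbabilityMeasure_map measurable_snd.aemeasurable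
  refine ⟨π.map Prod.snd, hυp, ?_, ⟨2, max r (1/2), by norm_num, le_max_of_le_left hr0,
    max_lt hr1 (by norm_num), ?_⟩, ?_⟩
  · have h1 : ∀ n : ℕ, (π.map Prod.snd (Iic 0)).toReal ≤ r ^ n := by
      intro n
      have h2 := htv n (Iic 0) measurableSet_Iic
      have h3 : μ.map (Oproc X S0 (n+1)) (Iic 0) = 0 := by
        rw [Measure.map_apply (hOm _) measurableSet_Iic, hO]
        have := Y_range hP hX hS0 hMk hbound (n := n+1) (by omega)
        rw [ae_iff] at this
        refine measure_mono_null (fun ω hω => ?_) this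
        intro h
        exact absurd hω (not_le.2 h.1)
      rw [h3, ENNReal.toReal_zero, zero_sub, abs_neg, abs_of_nonneg ENNReal.toReal_nonneg] at h2
      exact h2
    have h2 := ge_of_tendsto' (tendsto_pow_atTop_nhds_zero_of_lt_one hr0 hr1) h1
    have h3 := le_antisymm h2 ENNReal.toReal_nonneg
    exact (ENNReal.toReal_eq_zero_iff _).1 h3 |>.resolve_right (measure_ne_top _ _)
  · intro n A hA
    set r' := max r (1/2) with hr'
    have hr'h : 1 / 2 ≤ r' := le_max_right _ _
    have hr'r : r ≤ r' := le_max_left _ _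
    cases n with
    | zero =>
      have hp : IsProbabilityMeasure (μ.map (Oproc X S0 0)) :=
        Measure.isProbabilityMeasure_map (hOm 0).aemeasurable
      have a1 : (μ.map (Oproc X S0 0)).real A ≤ 1 := measureReal_le_one
      have a2 : (π.map Prod.snd).real A ≤ 1 := measureReal_le_one
      have a3 : 0 ≤ (μ.map (Oproc X S0 0)).real A := measureReal_nonneg
      have a4 : 0 ≤ (π.map Prod.snd).real A := measureReal_nonneg
      rw [pow_zero]
      change |(μ.map (Oproc X S0 0)).real A - (π.map Prod.snd).real A| ≤ _
      rw [abs_le]; constructor <;> linarith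
    | succ n =>
      refine (htv n A hA).trans ?_
      have h1 : r ^ n ≤ r' ^ n := pow_le_pow_left₀ hr0 hr'r n
      have h2 : 0 ≤ r' ^ n := by positivity
      rw [pow_succ]
      nlinarith
  · rintro φ hφ ⟨K, hK⟩
    set m := ∫ u, φ u ∂(π.map Prod.snd) with hm
    have hK0 : 0 ≤ K := (abs_nonneg _).trans (hK 0)
    have hmK : |m| ≤ K := by
      have := norm_integral_le_of_norm_le_const (μ := π.map Prod.snd) (C := K) (f := φ)
        (ae_of_all _ fun u => hK u)
      simpa using this
    have hφi : Integrable φ (π.map Prod.snd) :=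
      Integrable.of_bound hφ.aestronglyMeasurable K (ae_of_all _ fun u => hK u)
    set g : ℝ × ℝ → ℝ := fun z => φ z.2 - m with hg
    have hgm : Measurable g := (hφ.comp measurable_snd).sub_const m
    have hgK : ∀ z, |g z| ≤ 2 * K := fun z => by
      have := abs_sub (φ z.2) m
      have := hK z.2
      linarith
    have hg0 : ∫ z, g z ∂π = 0 := by
      have hi : Integrable (fun z : ℝ × ℝ => φ z.2) π := hφi.comp_measurable measurable_snd
      rw [hg, integral_sub hi (integrable_const _)]
      rw [hm, integral_map measurable_snd.aemeasurable hφ.aestronglyMeasurable]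
      simp
    have hl := lln (μ := μ) (f := fun j ω => g (Yp X S0 (j+1) ω)) (K := 2 * K) (C := 2 * K * (2 * (2 * K)))
      (r := r) (fun j => hgm.comp (hY _)) (fun j ω => hgK _) (by positivity) hr0 hr1 (fun i k => ?_)
    · filter_upwards [hl] with ω hω
      have h1 := hω.add_const m
      rw [zero_add] at h1
      refine h1.congr' ?_
      filter_upwards [eventually_ge_atTop 1] with n hn
      have hs : ∀ n : ℕ, ∑ j ∈ Finset.Icc 1 n, φ (Oproc X S0 j ω) =
          ∑ i ∈ Finset.range n, g (Yp X S0 (i+1) ω) + n * m := by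
        intro n
        induction n with
        | zero => simp
        | succ n ih =>
          rw [Finset.sum_Icc_succ_top (by omega), ih, Finset.sum_range_succ, hO]
          simp only [hg]
          push_cast
          ring
      have hn0 : (n : ℝ) ≠ 0 := by positivity
      rw [hs n]
      field_simp
    · have := Y_corr hP hX hS0 hMk hbound hπ hgm hgK hg0 (n := i+1) (by omega) k
      rw [show i + 1 + k = i + k + 1 by omega] at this
      refine this.trans (le_of_eq ?_)
      ring
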